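/- arXiv:1803.00760 — 2 statements merged into one kernel-verified Lean document; each statement's English description precedes it below -/
import Mathlib

section
/- There exist a constant A > 0 and X₀ such that for every real X ≥ X₀: ∏_{p ≤ X, p prime} (1 − (1 − p/X)/p)^{−1} ≥ e^γ (log X) (1 − 1/log X − A/(log X)²). -/
open Real Finset

/-!
For a prime `p ≤ X` put `u = (1 - p / X) / p`. By Bernoulli's inequality
`∑ₖ p⁻ᵏ (1 - pᵏ / X) / k ≤ ∑ₖ uᵏ / k = -log (1 - u)`, the sum on the left running over the powers
`pᵏ ≤ X`, so the logarithm of the product is at least the partial sum of `log ζ(1)` over `n ≤ X`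
smoothed by the weights `1 - n / X`.

With `L = log X` and `n = eᵛ` the weight is `max 0 (1 - e^(v - L))`, whose Laplace transform is the
Perron kernel `1 / (s (s + 1))` up to a factor `e^(-L s)`. The prime powers are compared with the
density `(1 - e⁻ᵛ) / v`, the Laplace transform of which is `log (1 + s) - log s`. Their difference
is an inverse Fourier transform of `log (s ζ(1 + s) / (1 + s)) / (s (s + 1))` on a vertical line
`re s = ε > 0`. By the `3-4-1` lower bound for `ζ` on the line `re s = 1`, two derivatives of this
function are integrable uniformly in `ε`; integrating by parts twice and letting `ε → 0` bounds the
difference by `O(L⁻²)`.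

The integral for the density is `log L + γ - 1 / L + O(L⁻²)`, where `γ` enters as `-Γ'(1)`.
-/

namespace ResonatorProduct

section ZetaSeries

open Complex Filter Topology MeasureTheory

/-- The integral `(s - 1) ∫ x in a..a + 1, (a ^ (-s) - x ^ (-s))` in closed form: with `a` running
over the positive integers these are the terms of an Euler–Maclaurin series for `(s - 1) ζ(s) - 1`
which converges in the half-plane `0 < re s`. -/
noncomputable def zetaTerm (a : ℝ) (s : ℂ) : ℂ :=
  (s - 1) * (a : ℂ) ^ (-s) + (((a + 1 : ℝ) : ℂ) ^ (1 - s) - (a : ℂ) ^ (1 - s))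

lemma differentiable_zetaTerm {a : ℝ} (ha : 0 < a) : Differentiable ℂ (zetaTerm a) := by
  have h₀ : (a : ℂ) ≠ 0 := mod_cast ha.ne'
  have h₁ : ((a + 1 : ℝ) : ℂ) ≠ 0 := mod_cast (by positivity : a + 1 ≠ 0)
  unfold zetaTerm
  fun_prop (disch := exact .inl ‹_›)

lemma zetaTerm_eq_integral {a : ℝ} (ha : 0 < a) (s : ℂ) :
    zetaTerm a s = (s - 1) * ∫ x in a..a + 1, ((a : ℂ) ^ (-s) - (x : ℂ) ^ (-s)) := by
  rcases eq_or_ne s 1 with rfl | hs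
  · simp [zetaTerm]
  have h₀ : (0 : ℝ) ∉ Set.uIcc a (a + 1) := by
    rw [Set.uIcc_of_le (by linarith)]
    exact fun h ↦ ha.not_ge h.1
  have hs' : 1 - s ≠ 0 := sub_ne_zero.mpr hs.symm
  rw [intervalIntegral.integral_sub (by simp)
      (intervalIntegral.intervalIntegrable_cpow (Or.inr h₀)),
    integral_cpow (Or.inr ⟨by simpa using hs, h₀⟩), intervalIntegral.integral_const, zetaTerm,
    neg_add_eq_sub]
  simp only [add_sub_cancel_left, one_smul]
  field_simp
  ring

section CpowIncrement

variable {a x : ℝ} {s : ℂ}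

lemma norm_cpow_sub_cpow_le_norm_mul_rpow (ha : 0 < a) (hs : 0 < s.re)
    (hx : x ∈ Set.Icc a (a + 1)) :
    ‖(a : ℂ) ^ (-s) - (x : ℂ) ^ (-s)‖ ≤ ‖s‖ * a ^ (-s.re - 1) := by
  have hs₀ : s ≠ 0 := by rintro rfl; simp at hs
  have hderiv : ∀ y ∈ Set.Icc a (a + 1), HasDerivWithinAt (fun y : ℝ ↦ (y : ℂ) ^ (-s))
      (-s * (y : ℂ) ^ (-s - 1)) (Set.Icc a (a + 1)) y := fun y hy ↦
    (hasDerivAt_ofReal_cpow_const (ha.trans_le hy.1).ne' (neg_ne_zero.mpr hs₀)).hasDerivWithinAt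
  have hbound : ∀ y ∈ Set.Icc a (a + 1), ‖-s * (y : ℂ) ^ (-s - 1)‖ ≤ ‖s‖ * a ^ (-s.re - 1) := by
    intro y hy
    rw [norm_mul, norm_neg, norm_cpow_eq_rpow_re_of_pos (ha.trans_le hy.1), sub_re, neg_re, one_re]
    gcongr ‖s‖ * ?_
    exact Real.rpow_le_rpow_of_nonpos ha hy.1 (by linarith)
  refine (Convex.norm_image_sub_le_of_norm_hasDerivWithin_le hderiv hbound (convex_Icc _ _)
    hx (Set.left_mem_Icc.mpr (by linarith))).trans (mul_le_of_le_one_right (by positivity) ?_)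
  rw [Real.norm_eq_abs, abs_le]
  constructor <;> linarith [hx.1, hx.2]

lemma norm_cpow_sub_cpow_le_two_mul_rpow (ha : 0 < a) (hs : 0 ≤ s.re) (hx : a ≤ x) :
    ‖(a : ℂ) ^ (-s) - (x : ℂ) ^ (-s)‖ ≤ 2 * a ^ (-s.re) := by
  have hle : x ^ (-s.re) ≤ a ^ (-s.re) := Real.rpow_le_rpow_of_nonpos ha hx (by linarith)
  refine (norm_sub_le _ _).trans ?_
  rw [norm_cpow_eq_rpow_re_of_pos ha, norm_cpow_eq_rpow_re_of_pos (ha.trans_le hx), neg_re]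
  linarith

lemma norm_cpow_sub_cpow_le_interpolated (ha : 0 < a) (hs : 0 < s.re)
    (hx : x ∈ Set.Icc a (a + 1)) {θ : ℝ} (hθ : θ ∈ Set.Icc 0 1) :
    ‖(a : ℂ) ^ (-s) - (x : ℂ) ^ (-s)‖ ≤ 2 * ‖s‖ ^ θ * a ^ (-(s.re + θ)) := by
  obtain ⟨hθ₀, hθ₁⟩ := hθ
  have : 0 ≤ 1 - θ := sub_nonneg.mpr hθ₁
  set N := ‖(a : ℂ) ^ (-s) - (x : ℂ) ^ (-s)‖
  calc N = N ^ θ * N ^ (1 - θ) := by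
        rw [← Real.rpow_add' (norm_nonneg _) (by norm_num), add_sub_cancel, Real.rpow_one]
    _ ≤ (‖s‖ * a ^ (-s.re - 1)) ^ θ * (2 * a ^ (-s.re)) ^ (1 - θ) := by
        gcongr
        · exact norm_cpow_sub_cpow_le_norm_mul_rpow ha hs hx
        · exact norm_cpow_sub_cpow_le_two_mul_rpow ha hs.le hx.1
    _ = 2 ^ (1 - θ) * ‖s‖ ^ θ * a ^ (-(s.re + θ)) := by
        rw [Real.mul_rpow (by positivity) (by positivity),
          Real.mul_rpow (by positivity) (by positivity), ← Real.rpow_mul ha.le,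
          ← Real.rpow_mul ha.le,
          show -(s.re + θ) = (-s.re - 1) * θ + -s.re * (1 - θ) by ring, Real.rpow_add ha]
        ring
    _ ≤ 2 * ‖s‖ ^ θ * a ^ (-(s.re + θ)) := by
        gcongr
        exact Real.rpow_le_self_of_one_le (by norm_num) (by linarith)

lemma norm_zetaTerm_le (ha : 0 < a) (hs : 0 < s.re) {θ : ℝ} (hθ : θ ∈ Set.Icc 0 1) :
    ‖zetaTerm a s‖ ≤ ‖s - 1‖ * (2 * ‖s‖ ^ θ * a ^ (-(s.re + θ))) := by
  rw [zetaTerm_eq_integral ha, norm_mul]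
  gcongr
  refine (intervalIntegral.norm_integral_le_of_norm_le_const
    (C := 2 * ‖s‖ ^ θ * a ^ (-(s.re + θ))) fun x hx ↦ ?_).trans (by simp)
  rw [Set.uIoc_of_le (by linarith)] at hx
  exact norm_cpow_sub_cpow_le_interpolated ha hs ⟨hx.1.le, hx.2⟩ hθ

end CpowIncrement

lemma summable_nat_add_one_rpow_neg {a : ℝ} (ha : 1 < a) :
    Summable fun n : ℕ ↦ ((n : ℝ) + 1) ^ (-a) := by
  simpa using (summable_nat_add_iff 1).mpr (Real.summable_nat_rpow.mpr (neg_lt_neg ha))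


lemma riemannZeta₁_eq {s : ℂ} (hs : s ≠ 1) : riemannZeta₁ s = (s - 1) * riemannZeta s := by
  rw [riemannZeta_eq_inv_sub_mul hs, mul_inv_cancel_left₀ (sub_ne_zero.mpr hs)]

lemma summable_zetaTerm {s : ℂ} (hs : 0 < s.re) :
    Summable fun n : ℕ ↦ zetaTerm (n + 1) s := by
  refine .of_norm_bounded ?_ fun n ↦
    norm_zetaTerm_le (by positivity : (0 : ℝ) < n + 1) hs (Set.right_mem_Icc.mpr zero_le_one)
  exact .mul_left _ (.mul_left _ (summable_nat_add_one_rpow_neg (by linarith)))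

lemma hasSum_zetaTerm_of_one_lt_re {s : ℂ} (hs : 1 < s.re) :
    HasSum (fun n : ℕ ↦ zetaTerm (n + 1) s) (riemannZeta₁ s - 1) := by
  have hs₁ : s ≠ 1 := by rintro rfl; simp at hs
  have hzeta : HasSum (fun n : ℕ ↦ (s - 1) * ((n + 1 : ℝ) : ℂ) ^ (-s)) (riemannZeta₁ s) := by
    have hsum : Summable fun n : ℕ ↦ 1 / (n + 1 : ℂ) ^ s := by
      simpa using (summable_nat_add_iff 1).mpr (Complex.summable_one_div_nat_cpow.mpr hs)
    rw [riemannZeta₁_eq hs₁, zeta_eq_tsum_one_div_nat_add_one_cpow hs]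
    refine (hsum.hasSum.mul_left (s - 1)).congr_fun fun n ↦ ?_
    push_cast
    rw [cpow_neg, one_div]
  have hlim : Tendsto (fun n : ℕ ↦ ((n + 1 : ℝ) : ℂ) ^ (1 - s)) atTop (𝓝 0) := by
    rw [tendsto_zero_iff_norm_tendsto_zero]
    refine (((tendsto_rpow_neg_atTop (sub_pos.mpr hs)).comp tendsto_natCast_atTop_atTop).comp
      (tendsto_add_atTop_nat 1)).congr fun n ↦ ?_
    rw [norm_cpow_eq_rpow_re_of_pos (by positivity)]
    simp
  rw [(summable_zetaTerm (by linarith)).hasSum_iff_tendsto_nat]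
  have hpartial (N : ℕ) : ∑ n ∈ range N, zetaTerm (n + 1) s =
      ∑ n ∈ range N, (s - 1) * ((n + 1 : ℝ) : ℂ) ^ (-s) + (((N + 1 : ℝ) : ℂ) ^ (1 - s) - 1) := by
    have := Finset.sum_range_sub (fun n : ℕ ↦ ((n + 1 : ℝ) : ℂ) ^ (1 - s)) N
    simp only [zetaTerm, sum_add_distrib]
    simpa using this
  simp_rw [hpartial]
  simpa [sub_eq_add_neg] using hzeta.tendsto_sum_nat.add (hlim.sub_const 1)

theorem riemannZeta₁_eq_one_add_tsum {s : ℂ} (hs : 0 < s.re) :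
    riemannZeta₁ s = 1 + ∑' n : ℕ, zetaTerm (n + 1) s := by
  obtain ⟨σ, hσ₀, hσ⟩ : ∃ σ, 0 < σ ∧ σ < min s.re 2 := exists_between (by simp [hs])
  obtain ⟨hσs, hσ₂⟩ := lt_min_iff.mp hσ
  let R := ‖s‖ + 3
  let U : Set ℂ := {z | σ < z.re} ∩ Metric.ball 0 R
  have hUo : IsOpen U := (isOpen_lt continuous_const continuous_re).inter Metric.isOpen_ball
  have hUc : Convex ℝ U := (convex_halfSpace_re_gt _).inter (convex_ball _ _)
  have hdiff : DifferentiableOn ℂ (fun z ↦ 1 + ∑' n : ℕ, zetaTerm (n + 1) z) U := by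
    refine (differentiableOn_const 1).add (differentiableOn_tsum_of_summable_norm
      (u := fun n : ℕ ↦ (R + 1) * (2 * R ^ (1 : ℝ) * (n + 1 : ℝ) ^ (-(σ + 1)))) ?_
      (fun n ↦ (differentiable_zetaTerm (by positivity)).differentiableOn) hUo fun n z hz ↦ ?_)
    · exact .mul_left _ (.mul_left _ (summable_nat_add_one_rpow_neg (by linarith)))
    · have hzσ : σ < z.re := hz.1
      have hzR : ‖z‖ < R := by simpa using hz.2
      refine (norm_zetaTerm_le (by positivity : (0 : ℝ) < n + 1) (hσ₀.trans hzσ)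
        (Set.right_mem_Icc.mpr zero_le_one)).trans ?_
      gcongr
      · exact (norm_sub_le _ _).trans (by simpa using hzR.le)
      · simp
  refine (differentiable_riemannZeta₁.differentiableOn.analyticOnNhd
    hUo).eqOn_of_preconnected_of_eventuallyEq (hdiff.analyticOnNhd hUo) hUc.isPreconnected
    (z₀ := 2) ⟨by simpa using hσ₂, ?_⟩ ?_ ⟨hσs, by simp [R]⟩
  · simp only [Metric.mem_ball, dist_zero_right, R, Complex.norm_ofNat]
    linarith [norm_nonneg s]
  · filter_upwards [(isOpen_lt continuous_const continuous_re).mem_nhds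
      (show (1 : ℝ) < (2 : ℂ).re by simp)] with z hz
    rw [(hasSum_zetaTerm_of_one_lt_re hz).tsum_eq, add_sub_cancel]

end ZetaSeries

section ZetaRatio

open Complex Filter Topology

lemma rpow_le_mul_rpow_of_le_mul {x y c δ : ℝ} (hx : 0 ≤ x) (hy : 0 ≤ y) (hc : 1 ≤ c)
    (hδ : δ ∈ Set.Icc 0 1) (hxy : x ≤ c * y) : x ^ δ ≤ c * y ^ δ :=
  calc x ^ δ ≤ (c * y) ^ δ := Real.rpow_le_rpow hx hxy hδ.1
    _ = c ^ δ * y ^ δ := Real.mul_rpow (by linarith) hy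
    _ ≤ c * y ^ δ := by
        gcongr
        exact Real.rpow_le_self_of_one_le hc hδ.2

/-- The function `(s - 1) ζ(s) / s`: the zeta function with its pole cancelled by `s / (s - 1)`,
whose logarithm is the Laplace transform of an explicit density at `s - 1`. It is holomorphic
off `0`, with value `1` at `1`. -/
noncomputable def zetaRatio (s : ℂ) : ℂ := riemannZeta₁ s / s

lemma zetaRatio_one : zetaRatio 1 = 1 := by simp [zetaRatio]

lemma analyticAt_zetaRatio {s : ℂ} (hs : s ≠ 0) : AnalyticAt ℂ zetaRatio s :=
  (differentiable_riemannZeta₁.analyticAt s).div analyticAt_id hs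

lemma differentiableAt_zetaRatio {s : ℂ} (hs : s ≠ 0) : DifferentiableAt ℂ zetaRatio s :=
  (analyticAt_zetaRatio hs).differentiableAt

lemma zetaRatio_eq {s : ℂ} (hs : s ≠ 1) : zetaRatio s = (s - 1) * riemannZeta s / s := by
  rw [zetaRatio, riemannZeta₁_eq hs]

lemma ne_zero_of_re_pos {s : ℂ} (hs : 0 < s.re) : s ≠ 0 := by
  rintro rfl
  simp at hs

lemma zetaRatio_ne_zero {s : ℂ} (hs : 1 ≤ s.re) : zetaRatio s ≠ 0 := by
  rcases eq_or_ne s 1 with rfl | hs₁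
  · simp [zetaRatio_one]
  · rw [zetaRatio_eq hs₁]
    exact div_ne_zero (mul_ne_zero (sub_ne_zero.mpr hs₁) (riemannZeta_ne_zero_of_one_le_re hs))
      (ne_zero_of_re_pos (by linarith))

lemma norm_riemannZeta₁_sub_one_le {s : ℂ} {δ σ : ℝ} (hδ : δ ∈ Set.Icc 0 1) (hs : 0 < s.re)
    (hσ : 1 < σ) (hσs : σ ≤ s.re + δ) :
    ‖riemannZeta₁ s - 1‖ ≤ ‖s - 1‖ * (2 * ‖s‖ ^ δ) * ∑' n : ℕ, ((n : ℝ) + 1) ^ (-σ) := by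
  rw [riemannZeta₁_eq_one_add_tsum hs, add_sub_cancel_left, ← tsum_mul_left]
  refine tsum_of_norm_bounded ((summable_nat_add_one_rpow_neg hσ).mul_left _).hasSum fun n ↦ ?_
  refine (norm_zetaTerm_le (by positivity) hs hδ).trans ?_
  rw [← mul_assoc]
  gcongr
  simp

theorem exists_norm_zetaRatio_le {δ : ℝ} (hδ : δ ∈ Set.Ioc 0 1) :
    ∃ C, 0 < C ∧ ∀ s : ℂ, s.re ∈ Set.Icc (1 - δ / 2) 3 →
      ‖zetaRatio s‖ ≤ C * (1 + |s.im|) ^ δ := by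
  obtain ⟨hδ₀, hδ₁⟩ := hδ
  set S := ∑' n : ℕ, ((n : ℝ) + 1) ^ (-(1 + δ / 2))
  have : 0 ≤ S := tsum_nonneg fun n ↦ by positivity
  refine ⟨2 + 18 * S, by positivity, fun s ⟨hs, hs₃⟩ ↦ ?_⟩
  have hre : 1 / 2 ≤ s.re := by linarith
  have hnorm : 1 / 2 ≤ ‖s‖ := hre.trans (re_le_norm s)
  set P := (1 + |s.im|) ^ δ
  have hP : 1 ≤ P := Real.one_le_rpow (by simp) hδ₀.le
  have hsP : ‖s‖ ^ δ ≤ 3 * P := by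
    refine rpow_le_mul_rpow_of_le_mul (norm_nonneg _) (by positivity) (by norm_num) ⟨hδ₀.le, hδ₁⟩ ?_
    have := norm_le_abs_re_add_abs_im s
    rw [abs_of_pos (by linarith : 0 < s.re)] at this
    linarith [abs_nonneg s.im]
  have hsub : ‖s - 1‖ ≤ 3 * ‖s‖ := (norm_sub_le _ _).trans (by rw [norm_one]; linarith)
  rw [zetaRatio, norm_div, div_le_iff₀ (by linarith)]
  calc ‖riemannZeta₁ s‖ ≤ ‖riemannZeta₁ s - 1‖ + 1 := by
        simpa using norm_add_le (riemannZeta₁ s - 1) 1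
    _ ≤ 3 * ‖s‖ * (2 * (3 * P)) * S + 2 * ‖s‖ * P := by
        gcongr
        · exact (norm_riemannZeta₁_sub_one_le ⟨hδ₀.le, hδ₁⟩ (by linarith) (by linarith)
            (by linarith : 1 + δ / 2 ≤ s.re + δ)).trans (by gcongr)
        · nlinarith
    _ = (2 + 18 * S) * P * ‖s‖ := by ring

theorem exists_norm_iteratedDeriv_zetaRatio_le {δ : ℝ} (hδ : δ ∈ Set.Ioc 0 1) (k : ℕ) :
    ∃ C, 0 < C ∧ ∀ s : ℂ, s.re ∈ Set.Icc 1 2 →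
      ‖iteratedDeriv k zetaRatio s‖ ≤ C * (1 + |s.im|) ^ δ := by
  obtain ⟨C, hC, hbound⟩ := exists_norm_zetaRatio_le hδ
  obtain ⟨hδ₀, hδ₁⟩ := hδ
  refine ⟨k.factorial * (C * 2) / (δ / 2) ^ k, by positivity, fun s ⟨hs₁, hs₂⟩ ↦ ?_⟩
  have hre {z : ℂ} (hz : z ∈ Metric.closedBall s (δ / 2)) :
      z.re ∈ Set.Icc (1 - δ / 2) 3 ∧ |z.im| ≤ |s.im| + 1 := by
    rw [mem_closedBall_iff_norm] at hz
    have hzre := abs_le.mp ((abs_re_le_norm (z - s)).trans hz)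
    have hzim := (abs_im_le_norm (z - s)).trans hz
    rw [sub_re] at hzre
    rw [sub_im] at hzim
    have := abs_sub_abs_le_abs_sub z.im s.im
    exact ⟨⟨by linarith, by linarith⟩, by linarith⟩
  have hdiff : DiffContOnCl ℂ zetaRatio (Metric.ball s (δ / 2)) :=
    DifferentiableOn.diffContOnCl_ball (U := {0}ᶜ)
      (fun z hz ↦ (differentiableAt_zetaRatio hz).differentiableWithinAt)
      fun z hz ↦ ne_zero_of_re_pos (by linarith [(hre hz).1.1])
  refine (norm_iteratedDeriv_le_of_forall_mem_sphere_norm_le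
    (C := C * (2 * (1 + |s.im|) ^ δ)) k (by positivity) hdiff fun z hz ↦ ?_).trans_eq (by ring)
  obtain ⟨hzre, hzim⟩ := hre (Metric.sphere_subset_closedBall hz)
  refine (hbound z hzre).trans ?_
  gcongr
  exact rpow_le_mul_rpow_of_le_mul (by positivity) (by positivity) one_le_two ⟨hδ₀.le, hδ₁⟩
    (by linarith [abs_nonneg s.im])

lemma one_le_norm_riemannZeta_product {x : ℝ} (hx : 0 < x) (y : ℝ) :
    1 ≤ ‖riemannZeta (1 + x)‖ ^ 3 * ‖riemannZeta (1 + x + I * y)‖ ^ 4 *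
      ‖riemannZeta (1 + x + 2 * I * y)‖ := by
  simpa [DirichletCharacter.LFunctionTrivChar, DirichletCharacter.LFunction_modOne_eq] using
    DirichletCharacter.norm_LFunction_product_ge_one (N := 1) 1 hx y

lemma norm_riemannZeta_le_two_mul_norm_zetaRatio {s : ℂ} (hs : 1 ≤ |s.im|) :
    ‖riemannZeta s‖ ≤ 2 * ‖zetaRatio s‖ := by
  have him : 1 ≤ ‖s - 1‖ := hs.trans (by simpa using abs_im_le_norm (s - 1))
  have hs₀ : 0 < ‖s‖ := by linarith [abs_im_le_norm s]
  have hle : ‖s‖ ≤ 2 * ‖s - 1‖ := by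
    have := norm_add_le (s - 1) 1
    rw [sub_add_cancel, norm_one] at this
    linarith
  rw [zetaRatio_eq (by rintro rfl; norm_num at hs), norm_div, norm_mul, ← mul_div_assoc,
    le_div_iff₀ hs₀]
  nlinarith [norm_nonneg (riemannZeta s)]

lemma norm_riemannZeta_one_add {x : ℝ} (hx : 0 < x) :
    ‖riemannZeta (1 + x)‖ = (1 + x) / x * ‖zetaRatio (1 + x)‖ := by
  have hnorm : ‖(1 + x : ℂ)‖ = 1 + x := mod_cast Complex.norm_of_nonneg (by positivity : 0 ≤ 1 + x)
  rw [zetaRatio_eq (by simpa using hx.ne'), norm_div, norm_mul, hnorm, add_sub_cancel_left,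
    Complex.norm_of_nonneg hx.le]
  field_simp

lemma exists_le_norm_zetaRatio_pow_four {δ : ℝ} (hδ : δ ∈ Set.Ioc 0 1) :
    ∃ c, 0 < c ∧ ∀ s : ℂ, s.re ∈ Set.Ioc 1 2 → 1 ≤ |s.im| →
      c * (s.re - 1) ^ 3 / (1 + |s.im|) ^ δ ≤ ‖zetaRatio s‖ ^ 4 := by
  obtain ⟨C, hC, hbound⟩ := exists_norm_zetaRatio_le hδ
  refine ⟨1 / (512 * C ^ 4), by positivity, fun s ⟨hs₁, hs₂⟩ him ↦ ?_⟩
  set P := (1 + |s.im|) ^ δ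
  have hP : 0 < P := by positivity
  set x := s.re - 1 with hx
  have hx₀ : 0 < x := sub_pos.mpr hs₁
  have hs : 1 + x + I * s.im = s := by apply Complex.ext <;> simp [hx]
  have hreal : ‖riemannZeta (1 + x)‖ ≤ 2 / x * C := by
    rw [norm_riemannZeta_one_add hx₀]
    gcongr
    · linarith
    · simpa using hbound (1 + x) (by simp; constructor <;> linarith [hδ.1])
  have hdouble : ‖riemannZeta (1 + x + 2 * I * s.im)‖ ≤ 2 * (C * (2 * P)) := by
    have hre : (1 + x + 2 * I * s.im : ℂ).re = s.re := by simp [hx]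
    have him' : |(1 + x + 2 * I * s.im : ℂ).im| = 2 * |s.im| := by simp [abs_mul]
    refine (norm_riemannZeta_le_two_mul_norm_zetaRatio (by rw [him']; linarith)).trans ?_
    refine mul_le_mul_of_nonneg_left ((hbound _ ?_).trans ?_) zero_le_two
    · rw [hre]
      constructor <;> linarith [hδ.1]
    · rw [him']
      gcongr
      exact rpow_le_mul_rpow_of_le_mul (by positivity) (by positivity) one_le_two
        ⟨hδ.1.le, hδ.2⟩ (by linarith)
  have hprod := one_le_norm_riemannZeta_product hx₀ s.im
  rw [hs] at hprod
  have hmain : 1 ≤ (2 / x * C) ^ 3 * (2 * ‖zetaRatio s‖) ^ 4 * (2 * (C * (2 * P))) :=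
    hprod.trans (by gcongr; exact norm_riemannZeta_le_two_mul_norm_zetaRatio him)
  rw [div_le_iff₀ hP, div_mul_eq_mul_div, one_mul, div_le_iff₀ (by positivity)]
  rw [div_mul_eq_mul_div, div_pow, div_mul_eq_mul_div, div_mul_eq_mul_div,
    le_div_iff₀ (by positivity)] at hmain
  linarith

lemma norm_sub_le_of_norm_hasDerivAt_le_horizontal {f f' : ℂ → ℂ} {z w : ℂ} {C : ℝ}
    (him : z.im = w.im) (hre : z.re ≤ w.re)
    (hf : ∀ u : ℂ, u.im = w.im → u.re ∈ Set.Icc z.re w.re → HasDerivAt f (f' u) u)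
    (hC : ∀ u : ℂ, u.im = w.im → u.re ∈ Set.Icc z.re w.re → ‖f' u‖ ≤ C) :
    ‖f w - f z‖ ≤ C * (w.re - z.re) := by
  have hnorm : ‖w - z‖ = w.re - z.re := by
    rw [← abs_re_eq_norm.mpr (by simp [him]), sub_re, abs_of_nonneg (sub_nonneg.mpr hre)]
  rw [← hnorm]
  exact Convex.norm_image_sub_le_of_norm_hasDerivWithin_le
    (s := Set.Icc z.re w.re ×ℂ {w.im})
    (fun u hu ↦ (hf u hu.2 hu.1).hasDerivWithinAt) (fun u hu ↦ hC u hu.2 hu.1)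
    (((convex_Icc _ _).linear_preimage reLm).inter ((convex_singleton _).linear_preimage imLm))
    (mem_reProdIm.mpr ⟨Set.left_mem_Icc.mpr hre, him⟩)
    (mem_reProdIm.mpr ⟨Set.right_mem_Icc.mpr hre, rfl⟩)

lemma exists_norm_zetaRatio_sub_le {δ : ℝ} (hδ : δ ∈ Set.Ioc 0 1) :
    ∃ C, 0 < C ∧ ∀ z w : ℂ, z.im = w.im → 1 ≤ z.re → z.re ≤ w.re → w.re ≤ 2 →
      ‖zetaRatio w - zetaRatio z‖ ≤ C * (1 + |w.im|) ^ δ * (w.re - z.re) := by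
  obtain ⟨C, hC, hderiv⟩ := exists_norm_iteratedDeriv_zetaRatio_le hδ 1
  refine ⟨C, hC, fun z w him hz hzw hw ↦ norm_sub_le_of_norm_hasDerivAt_le_horizontal him hzw
    (f' := deriv zetaRatio) (fun u _ hu ↦ (differentiableAt_zetaRatio
      (ne_zero_of_re_pos (by linarith [hu.1]))).hasDerivAt) fun u huim hu ↦ ?_⟩
  simpa [huim] using hderiv u ⟨hz.trans hu.1, hu.2.trans hw⟩

lemma exists_pow_four_eq_mul_pow_three {c C : ℝ} (hc : 0 < c) (hC : 0 < C) :
    ∃ κ m : ℝ, κ ∈ Set.Ioc 0 1 ∧ 0 < m ∧ m ^ 4 = c * κ ^ 3 ∧ C * κ ≤ m := by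
  set κ := min 1 (c / C ^ 4)
  have hκ : 0 < κ := by positivity
  have hκC : C ^ 4 * κ ≤ c := by
    rw [mul_comm, ← le_div_iff₀ (by positivity)]
    exact min_le_right _ _
  obtain ⟨m, hm, hm₄⟩ : ∃ m : ℝ, 0 < m ∧ m ^ 4 = c * κ ^ 3 :=
    ⟨(c * κ ^ 3) ^ (1 / 4 : ℝ), by positivity, by
      rw [← Real.rpow_natCast, ← Real.rpow_mul (by positivity)]; norm_num⟩
  refine ⟨κ, m, ⟨hκ, min_le_left _ _⟩, hm, hm₄, ?_⟩
  refine le_of_pow_le_pow_left₀ (n := 4) (by norm_num) hm.le ?_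
  calc (C * κ) ^ 4 = C ^ 4 * κ * κ ^ 3 := by ring
    _ ≤ m ^ 4 := by rw [hm₄]; gcongr

lemma exists_le_norm_zetaRatio_of_one_le_abs_im {δ : ℝ} (hδ : δ ∈ Set.Ioc 0 1) :
    ∃ c, 0 < c ∧ ∀ s : ℂ, s.re ∈ Set.Icc 1 2 → 1 ≤ |s.im| →
      c * (1 + |s.im|) ^ (-(4 * δ)) ≤ ‖zetaRatio s‖ := by
  obtain ⟨C, hC, hlip⟩ := exists_norm_zetaRatio_sub_le hδ
  obtain ⟨c, hc, hpow⟩ := exists_le_norm_zetaRatio_pow_four hδ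
  obtain ⟨κ, m, ⟨hκ₀, hκ₁⟩, hm, hm₄, hκm⟩ :=
    exists_pow_four_eq_mul_pow_three hc (by positivity : 0 < 2 * C)
  refine ⟨m / 2, by positivity, fun s ⟨hs₁, hs₂⟩ him ↦ ?_⟩
  set P := (1 + |s.im|) ^ δ
  have hP₄ : (1 + |s.im|) ^ (-(4 * δ)) = (P ^ 4)⁻¹ := by
    rw [Real.rpow_neg (by positivity), mul_comm, ← Real.rpow_mul_natCast (by positivity)]
    norm_num
  have hP : 1 ≤ P := Real.one_le_rpow (by simp) hδ.1.le
  set η := κ / P ^ 5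
  have hη₀ : 0 < η := by positivity
  have hη₁ : η ≤ 1 := (div_le_one (by positivity)).mpr (hκ₁.trans (one_le_pow₀ hP))
  let z : ℂ := ⟨max s.re (1 + η), s.im⟩
  have hz : 1 + η ≤ z.re := le_max_right _ _
  have hz₂ : z.re ≤ 2 := max_le hs₂ (by linarith)
  have hlower : m / P ^ 4 ≤ ‖zetaRatio z‖ := by
    refine le_of_pow_le_pow_left₀ (n := 4) (by norm_num) (norm_nonneg _) ?_
    calc (m / P ^ 4) ^ 4 = c * η ^ 3 / P := by
          rw [div_pow, hm₄]
          simp only [η]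
          field_simp
      _ ≤ c * (z.re - 1) ^ 3 / P := by gcongr; linarith
      _ ≤ ‖zetaRatio z‖ ^ 4 := hpow z ⟨by linarith, hz₂⟩ him
  have hshift : ‖zetaRatio z - zetaRatio s‖ ≤ m / 2 / P ^ 4 := by
    calc ‖zetaRatio z - zetaRatio s‖ ≤ C * P * (z.re - s.re) :=
          hlip s z rfl hs₁ (le_max_left _ _) hz₂
      _ ≤ C * P * η := by
          gcongr
          rw [sub_le_iff_le_add]
          exact max_le (by linarith) (by linarith)
      _ = 2 * C * κ / 2 / P ^ 4 := by simp only [η]; field_simp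
      _ ≤ m / 2 / P ^ 4 := by gcongr
  have := norm_le_norm_add_norm_sub' (zetaRatio z) (zetaRatio s)
  have hhalf : m / P ^ 4 = m / 2 / P ^ 4 + m / 2 / P ^ 4 := by ring
  rw [hP₄, ← div_eq_mul_inv]
  linarith

theorem exists_le_norm_zetaRatio {δ : ℝ} (hδ : δ ∈ Set.Ioc 0 1) :
    ∃ c, 0 < c ∧ ∀ s : ℂ, s.re ∈ Set.Icc 1 2 →
      c * (1 + |s.im|) ^ (-(4 * δ)) ≤ ‖zetaRatio s‖ := by
  obtain ⟨c₁, hc₁, hfar⟩ := exists_le_norm_zetaRatio_of_one_le_abs_im hδ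
  have hcont : ContinuousOn zetaRatio (Set.Icc 1 2 ×ℂ Set.Icc (-1) 1) := fun s hs ↦
    (differentiableAt_zetaRatio (ne_zero_of_re_pos (zero_lt_one.trans_le hs.1.1))).continuousAt
      |>.continuousWithinAt
  obtain ⟨c₂, hc₂, hnear⟩ := (isCompact_Icc.reProdIm isCompact_Icc).exists_forall_le' hcont.norm
    (a := 0) fun s hs ↦ norm_pos_iff.mpr (zetaRatio_ne_zero hs.1.1)
  refine ⟨min c₁ c₂, by positivity, fun s hs ↦ ?_⟩
  rcases le_total 1 |s.im| with him | him
  · exact (by gcongr; exact min_le_left _ _ : _ ≤ _).trans (hfar s hs him)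
  · refine le_trans ?_ (hnear s ⟨hs, abs_le.mp him⟩)
    refine (mul_le_of_le_one_right (by positivity) ?_).trans (min_le_right _ _)
    exact Real.rpow_le_one_of_one_le_of_nonpos (by simp) (by linarith [hδ.1])

end ZetaRatio

section JetGrowth

open Complex Filter Topology

/-- The function `f` is analytic at the points of `S`, where its derivatives of order at most `n`
are `O((1 + |im s|) ^ a)`. -/
structure JetGrowthOn (S : Set ℂ) (n : ℕ) (a : ℝ) (f : ℂ → ℂ) : Prop where
  analyticAt : ∀ s ∈ S, AnalyticAt ℂ f s
  exists_bound : ∀ k ≤ n, ∃ C, ∀ s ∈ S, ‖iteratedDeriv k f s‖ ≤ C * (1 + |s.im|) ^ a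

namespace JetGrowthOn

variable {S T : Set ℂ} {n : ℕ} {a b : ℝ} {f g : ℂ → ℂ}

lemma mono (hf : JetGrowthOn S n a f) (hTS : T ⊆ S) : JetGrowthOn T n a f where
  analyticAt s hs := hf.analyticAt s (hTS hs)
  exists_bound k hk := (hf.exists_bound k hk).imp fun _ hC s hs ↦ hC s (hTS hs)

lemma union (hS : JetGrowthOn S n a f) (hT : JetGrowthOn T n a f) :
    JetGrowthOn (S ∪ T) n a f where
  analyticAt s hs := hs.elim (hS.analyticAt s) (hT.analyticAt s)
  exists_bound k hk := by
    obtain ⟨C₁, hC₁⟩ := hS.exists_bound k hk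
    obtain ⟨C₂, hC₂⟩ := hT.exists_bound k hk
    refine ⟨max C₁ C₂, fun s hs ↦ ?_⟩
    rcases hs with hs | hs
    · exact (hC₁ s hs).trans (by gcongr; exact le_max_left _ _)
    · exact (hC₂ s hs).trans (by gcongr; exact le_max_right _ _)

lemma congr (hf : JetGrowthOn S n a f) (hfg : ∀ s ∈ S, f =ᶠ[𝓝 s] g) : JetGrowthOn S n a g where
  analyticAt s hs := (hf.analyticAt s hs).congr (hfg s hs)
  exists_bound k hk := (hf.exists_bound k hk).imp fun C hC s hs ↦ by
    rw [← (hfg s hs).iteratedDeriv_eq k]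
    exact hC s hs

lemma comp_ofReal_add (hf : JetGrowthOn S n a f) (c : ℝ) :
    JetGrowthOn ((fun s : ℂ ↦ c + s) ⁻¹' S) n a fun s ↦ f (c + s) where
  analyticAt s hs := (hf.analyticAt _ hs).fun_comp (by fun_prop)
  exists_bound k hk := (hf.exists_bound k hk).imp fun C hC s hs ↦ by
    rw [iteratedDeriv_comp_const_add]
    simpa using hC _ hs

lemma mul (hf : JetGrowthOn S n a f) (hg : JetGrowthOn S n b g) :
    JetGrowthOn S n (a + b) fun s ↦ f s * g s where
  analyticAt s hs := (hf.analyticAt s hs).mul (hg.analyticAt s hs)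
  exists_bound k hk := by
    choose! A hA using hf.exists_bound
    choose! B hB using hg.exists_bound
    refine ⟨∑ i ∈ range (k + 1), k.choose i * A i * B (k - i), fun s hs ↦ ?_⟩
    rw [iteratedDeriv_fun_mul (hf.analyticAt s hs).contDiffAt (hg.analyticAt s hs).contDiffAt,
      sum_mul]
    refine norm_sum_le_of_le _ fun i hi ↦ ?_
    have hik : i ≤ k := mem_range_succ_iff.mp hi
    have hA₀ := hA i (hik.trans hk) s hs
    have hB₀ := hB (k - i) ((k.sub_le i).trans hk) s hs
    rw [norm_mul, norm_mul, Complex.norm_natCast, Real.rpow_add (by positivity)]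
    calc k.choose i * ‖iteratedDeriv i f s‖ * ‖iteratedDeriv (k - i) g s‖
        ≤ k.choose i * (A i * (1 + |s.im|) ^ a) * (B (k - i) * (1 + |s.im|) ^ b) := by
          gcongr
          exact mul_nonneg (by positivity) ((norm_nonneg _).trans hA₀)
      _ = k.choose i * A i * B (k - i) * ((1 + |s.im|) ^ a * (1 + |s.im|) ^ b) := by ring

end JetGrowthOn

lemma exists_jetGrowthOn_ball {f : ℂ → ℂ} {z : ℂ} (hf : AnalyticAt ℂ f z) (n : ℕ) (a : ℝ) :
    ∃ r > 0, JetGrowthOn (Metric.ball z r) n a f := by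
  let q (k : ℕ) (s : ℂ) : ℝ := ‖iteratedDeriv k f s‖ / (1 + |s.im|) ^ a
  have hq (k : ℕ) : ContinuousAt (q k) z := by
    have hjet : ContinuousAt (iteratedDeriv k f) z := by
      rw [iteratedDeriv_eq_iterate]
      exact (hf.iterated_deriv k).continuousAt
    have hweight : Continuous fun s : ℂ ↦ (1 + |s.im|) ^ a :=
      (by fun_prop : Continuous fun s : ℂ ↦ 1 + |s.im|).rpow_const
        fun s ↦ .inl (by positivity)
    exact hjet.norm.div hweight.continuousAt (by positivity)
  have hbound : ∀ᶠ s in 𝓝 z, ∀ k ∈ range (n + 1), q k s < q k z + 1 :=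
    (eventually_all_finset _).mpr fun k _ ↦
      (hq k).tendsto.eventually_lt_const (lt_add_one _)
  obtain ⟨r, hr, hball⟩ :=
    Metric.eventually_nhds_iff_ball.mp (hf.eventually_analyticAt.and hbound)
  refine ⟨r, hr, fun s hs ↦ (hball s hs).1, fun k hk ↦ ⟨q k z + 1, fun s hs ↦ ?_⟩⟩
  rw [← div_le_iff₀ (by positivity)]
  exact ((hball s hs).2 k (mem_range_succ_iff.mpr hk)).le

lemma one_add_abs_im_le {s : ℂ} {r : ℝ} (hr : 0 < r) (hs : r ≤ ‖s‖) :
    1 + |s.im| ≤ (1 / r + 1) * ‖s‖ := by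
  have : 1 ≤ 1 / r * ‖s‖ := by rwa [one_div_mul_eq_div, one_le_div hr]
  linarith [abs_im_le_norm s]

lemma jetGrowthOn_inv {r : ℝ} (hr : 0 < r) (n : ℕ) :
    JetGrowthOn {s | r ≤ ‖s‖} n (-1) fun s ↦ s⁻¹ where
  analyticAt s hs := analyticAt_inv (norm_pos_iff.mp (hr.trans_le hs))
  exists_bound k _ := by
    refine ⟨k.factorial / r ^ k * (1 / r + 1), fun s hs ↦ ?_⟩
    have hs₀ : 0 < ‖s‖ := hr.trans_le hs
    have hinv : ‖s‖⁻¹ ≤ (1 / r + 1) * (1 + |s.im|)⁻¹ := by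
      rw [← div_eq_mul_inv, le_div_iff₀ (by positivity), inv_mul_le_iff₀ hs₀, mul_comm]
      exact one_add_abs_im_le hr hs
    have hderiv : iteratedDeriv k (fun s : ℂ ↦ s⁻¹) s =
        (-1) ^ k * k.factorial * s ^ (-1 - k : ℤ) := by
      rw [iteratedDeriv_eq_iterate]
      exact iter_deriv_inv k s
    have hnorm : ‖s‖ ^ (-1 - k : ℤ) = ‖s‖⁻¹ / ‖s‖ ^ k := by
      rw [zpow_sub₀ hs₀.ne', zpow_neg_one, zpow_natCast]
    rw [hderiv, Real.rpow_neg_one]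
    calc ‖(-1 : ℂ) ^ k * k.factorial * s ^ (-1 - k : ℤ)‖
        = k.factorial / ‖s‖ ^ k * ‖s‖⁻¹ := by
          rw [norm_mul, norm_mul, norm_pow, norm_neg, norm_one, one_pow, one_mul,
            Complex.norm_natCast, norm_zpow, hnorm]
          ring
      _ ≤ k.factorial / r ^ k * ((1 / r + 1) * (1 + |s.im|)⁻¹) := by
          gcongr
          exact hs
      _ = k.factorial / r ^ k * (1 / r + 1) * (1 + |s.im|)⁻¹ := by ring

end JetGrowth

section LogZeta

open Complex Filter Topology
open scoped ArithmeticFunction.vonMangoldt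

/-- The coefficient `Λ(n) / log n` of `n ^ (-s)` in the Dirichlet series of `log ζ(s)`. -/
noncomputable def logZetaCoeff (n : ℕ) : ℝ := Λ n / Real.log n

lemma logZetaCoeff_nonneg (n : ℕ) : 0 ≤ logZetaCoeff n :=
  div_nonneg ArithmeticFunction.vonMangoldt_nonneg (Real.log_natCast_nonneg n)

lemma norm_logZetaCoeff_le_one (n : ℕ) : ‖(logZetaCoeff n : ℂ)‖ ≤ 1 := by
  rw [Complex.norm_of_nonneg (logZetaCoeff_nonneg n)]
  exact div_le_one_of_le₀ ArithmeticFunction.vonMangoldt_le_log (Real.log_natCast_nonneg n)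

/-- The branch of `log ζ(s)` on `1 < re s` given by its Dirichlet series. -/
noncomputable def logZeta (s : ℂ) : ℂ := LSeries (fun n ↦ (logZetaCoeff n : ℂ)) s

lemma lseriesSummable_logZetaCoeff {s : ℂ} (hs : 1 < s.re) :
    LSeriesSummable (fun n ↦ (logZetaCoeff n : ℂ)) s :=
  LSeriesSummable_of_bounded_of_one_lt_re (m := 1) (fun n _ ↦ norm_logZetaCoeff_le_one n) hs

lemma exp_logZeta {s : ℂ} (hs : 1 < s.re) : Complex.exp (logZeta s) = riemannZeta s := by
  rw [← riemannZeta_eq_exp_LSeries hs, logZeta]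
  simp only [logZetaCoeff, ofReal_div]

lemma differentiableAt_logZeta {s : ℂ} (hs : 1 < s.re) : DifferentiableAt ℂ logZeta s := by
  have habs : LSeries.abscissaOfAbsConv (fun n ↦ (logZetaCoeff n : ℂ)) ≤ 1 :=
    LSeries.abscissaOfAbsConv_le_of_le_const ⟨1, fun n _ ↦ norm_logZetaCoeff_le_one n⟩
  exact (LSeries_hasDerivAt (habs.trans_lt (mod_cast hs))).differentiableAt

lemma logZeta_im_ofReal (x : ℝ) : (logZeta x).im = 0 := by
  have hreal (n : ℕ) : LSeries.term (fun n ↦ (logZetaCoeff n : ℂ)) x n =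
      ((if n = 0 then 0 else logZetaCoeff n / (n : ℝ) ^ x : ℝ) : ℂ) := by
    rw [LSeries.term_def]
    split_ifs
    · rfl
    · rw [ofReal_div, ofReal_cpow n.cast_nonneg, ofReal_natCast]
  rw [logZeta, LSeries, tsum_congr hreal, ← ofReal_tsum, ofReal_im]

lemma exists_norm_logZeta_le :
    ∃ C, ∀ s : ℂ, s.re = 2 → ‖logZeta s‖ ≤ C := by
  refine ⟨∑' n, ‖LSeries.term (fun n ↦ (logZetaCoeff n : ℂ)) 2 n‖, fun s hs ↦ ?_⟩
  refine (norm_tsum_le_tsum_norm (lseriesSummable_logZetaCoeff (by linarith)).norm).trans_eq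
    (tsum_congr fun n ↦ ?_)
  simp only [LSeries.norm_term_eq, hs, re_ofNat]

/-- The branch of `log ((s - 1) ζ(s) / s)` on `1 < re s` that is real on the real axis. -/
noncomputable def logZetaRatio (s : ℂ) : ℂ := logZeta s - (Complex.log s - Complex.log (s - 1))

lemma logZetaRatio_im_ofReal {x : ℝ} (hx : 1 < x) : (logZetaRatio x).im = 0 := by
  have hsub : Complex.log ((x : ℂ) - 1) = Real.log (x - 1) := by
    rw [ofReal_log (by linarith), ofReal_sub, ofReal_one]
  rw [logZetaRatio, hsub, ← ofReal_log (by linarith), ← ofReal_sub, sub_im, logZeta_im_ofReal,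
    ofReal_im, sub_zero]

variable {s : ℂ}

lemma exp_logZetaRatio (hs : 1 < s.re) : Complex.exp (logZetaRatio s) = zetaRatio s := by
  have hs₁ : s ≠ 1 := by rintro rfl; exact lt_irrefl _ hs
  rw [logZetaRatio, Complex.exp_sub, Complex.exp_sub,
    Complex.exp_log (ne_zero_of_re_pos (by linarith)), Complex.exp_log (sub_ne_zero.mpr hs₁),
    exp_logZeta hs, zetaRatio_eq hs₁, div_div_eq_mul_div, mul_comm]

lemma differentiableAt_logZetaRatio (hs : 1 < s.re) : DifferentiableAt ℂ logZetaRatio s :=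
  (differentiableAt_logZeta hs).sub
    ((differentiableAt_id.clog (.inl (zero_lt_one.trans hs))).sub
      ((differentiableAt_id.sub_const 1).clog (.inl (by simpa using hs))))

lemma hasDerivAt_logZetaRatio (hs : 1 < s.re) :
    HasDerivAt logZetaRatio (logDeriv zetaRatio s) s := by
  have hderiv := (differentiableAt_logZetaRatio hs).hasDerivAt
  have hexp : (fun z ↦ Complex.exp (logZetaRatio z)) =ᶠ[𝓝 s] zetaRatio := by
    filter_upwards [(isOpen_lt continuous_const continuous_re).mem_nhds hs] with z hz
      using exp_logZetaRatio hz
  refine hderiv.congr_deriv ?_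
  rw [logDeriv_apply, ← hexp.deriv_eq, hderiv.cexp.deriv, exp_logZetaRatio hs,
    mul_div_cancel_left₀ _ (zetaRatio_ne_zero hs.le)]

lemma deriv_logDeriv {f : ℂ → ℂ} (hf : AnalyticAt ℂ f s) (hs : f s ≠ 0) :
    deriv (logDeriv f) s = iteratedDeriv 2 f s / f s - logDeriv f s ^ 2 := by
  have hquot := (hf.deriv.differentiableAt.hasDerivAt.div hf.differentiableAt.hasDerivAt hs).deriv
  rw [logDeriv, hquot, Pi.div_apply, iteratedDeriv_succ, iteratedDeriv_one]
  field_simp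

lemma norm_log_sub_log_sub_one_le (hs : s.re = 2) :
    ‖Complex.log s - Complex.log (s - 1)‖ ≤ 1 := by
  have hslit {u : ℂ} (hu : u.re ∈ Set.Icc (s - 1).re s.re) : 1 ≤ u.re := by
    simpa [hs, show (2 : ℝ) - 1 = 1 by norm_num] using hu.1
  have hmain := norm_sub_le_of_norm_hasDerivAt_le_horizontal (z := s - 1) (w := s) (C := 1)
    (f := Complex.log) (f' := fun u ↦ u⁻¹) (by simp) (by simp)
    (fun u _ hu ↦ hasDerivAt_log (.inl (by linarith [hslit hu])))
    (fun u _ hu ↦ by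
      rw [norm_inv]
      exact inv_le_one_of_one_le₀ ((hslit hu).trans (re_le_norm u)))
  simpa using hmain

lemma exists_norm_iteratedDeriv_div_zetaRatio_le {ε : ℝ} (hε : ε ∈ Set.Ioc 0 1) (n : ℕ) :
    ∃ C, 0 < C ∧ ∀ s : ℂ, s.re ∈ Set.Icc 1 2 →
      ‖iteratedDeriv n zetaRatio s / zetaRatio s‖ ≤ C * (1 + |s.im|) ^ ε := by
  have hδ : ε / 5 ∈ Set.Ioc 0 1 := ⟨by linarith [hε.1], by linarith [hε.2]⟩
  obtain ⟨c, hc, hlower⟩ := exists_le_norm_zetaRatio hδ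
  obtain ⟨C, hC, hderiv⟩ := exists_norm_iteratedDeriv_zetaRatio_le hδ n
  refine ⟨C / c, by positivity, fun s hs ↦ ?_⟩
  have hT : 0 < 1 + |s.im| := by positivity
  calc ‖iteratedDeriv n zetaRatio s / zetaRatio s‖
      ≤ C * (1 + |s.im|) ^ (ε / 5) / (c * (1 + |s.im|) ^ (-(4 * (ε / 5)))) := by
        rw [norm_div]
        gcongr
        exacts [hderiv s hs, hlower s hs]
    _ = C / c * (1 + |s.im|) ^ (ε / 5 - -(4 * (ε / 5))) := by
        rw [Real.rpow_sub hT, mul_div_mul_comm]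
    _ = C / c * (1 + |s.im|) ^ ε := by ring_nf

lemma exists_norm_logDeriv_zetaRatio_le {ε : ℝ} (hε : ε ∈ Set.Ioc 0 1) :
    ∃ C, 0 < C ∧ ∀ s : ℂ, s.re ∈ Set.Icc 1 2 →
      ‖logDeriv zetaRatio s‖ ≤ C * (1 + |s.im|) ^ ε := by
  simpa only [iteratedDeriv_one] using! exists_norm_iteratedDeriv_div_zetaRatio_le hε 1

lemma exists_norm_deriv_logDeriv_zetaRatio_le {ε : ℝ} (hε : ε ∈ Set.Ioc 0 1) :
    ∃ C, 0 < C ∧ ∀ s : ℂ, s.re ∈ Set.Icc 1 2 →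
      ‖deriv (logDeriv zetaRatio) s‖ ≤ C * (1 + |s.im|) ^ ε := by
  obtain ⟨C₁, hC₁, hlogDeriv⟩ :=
    exists_norm_logDeriv_zetaRatio_le (ε := ε / 2) ⟨by linarith [hε.1], by linarith [hε.2]⟩
  obtain ⟨C₂, hC₂, hderiv₂⟩ := exists_norm_iteratedDeriv_div_zetaRatio_le hε 2
  refine ⟨C₂ + C₁ ^ 2, by positivity, fun s hs ↦ ?_⟩
  rw [deriv_logDeriv (analyticAt_zetaRatio (ne_zero_of_re_pos (by linarith [hs.1])))
    (zetaRatio_ne_zero hs.1)]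
  calc ‖iteratedDeriv 2 zetaRatio s / zetaRatio s - logDeriv zetaRatio s ^ 2‖
      ≤ C₂ * (1 + |s.im|) ^ ε + (C₁ * (1 + |s.im|) ^ (ε / 2)) ^ 2 := by
        refine (norm_sub_le _ _).trans (add_le_add (hderiv₂ s hs) ?_)
        rw [norm_pow]
        gcongr
        exact hlogDeriv s hs
    _ = (C₂ + C₁ ^ 2) * (1 + |s.im|) ^ ε := by
        rw [mul_pow, ← Real.rpow_mul_natCast (by positivity), Nat.cast_ofNat,
          div_mul_cancel₀ _ two_ne_zero, add_mul]

lemma exists_norm_logZetaRatio_le {ε : ℝ} (hε : ε ∈ Set.Ioc 0 1) :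
    ∃ C, ∀ s : ℂ, s.re ∈ Set.Ioc 1 2 → ‖logZetaRatio s‖ ≤ C * (1 + |s.im|) ^ ε := by
  obtain ⟨C, hC, hderiv⟩ := exists_norm_logDeriv_zetaRatio_le hε
  obtain ⟨K, hK⟩ := exists_norm_logZeta_le
  refine ⟨K + 1 + C, fun s ⟨hs₁, hs₂⟩ ↦ ?_⟩
  set P := (1 + |s.im|) ^ ε
  have hP : 1 ≤ P := Real.one_le_rpow (by simp) hε.1.le
  let z : ℂ := ⟨2, s.im⟩
  have hz : ‖logZetaRatio z‖ ≤ K + 1 :=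
    (norm_sub_le _ _).trans (add_le_add (hK z rfl) (norm_log_sub_log_sub_one_le rfl))
  have hzs : ‖logZetaRatio z - logZetaRatio s‖ ≤ C * P := by
    refine (norm_sub_le_of_norm_hasDerivAt_le_horizontal (z := s) (w := z) rfl hs₂
      (fun u _ hu ↦ hasDerivAt_logZetaRatio (hs₁.trans_le hu.1)) fun u him hu ↦ ?_).trans
      (mul_le_of_le_one_right (by positivity) (by simp only [z]; linarith))
    simpa [him, z] using hderiv u ⟨hs₁.le.trans hu.1, hu.2⟩
  have := norm_le_norm_add_norm_sub (logZetaRatio z) (logZetaRatio s)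
  nlinarith [(norm_nonneg _).trans hz]

theorem jetGrowthOn_logZetaRatio {ε : ℝ} (hε : ε ∈ Set.Ioc 0 1) :
    JetGrowthOn {s | s.re ∈ Set.Ioc 1 2} 2 ε logZetaRatio where
  analyticAt s hs := by
    have hdiff : DifferentiableOn ℂ logZetaRatio {z | 1 < z.re} := fun z hz ↦
      (differentiableAt_logZetaRatio hz).differentiableWithinAt
    exact hdiff.analyticAt ((isOpen_lt continuous_const continuous_re).mem_nhds hs.1)
  exists_bound k hk := by
    have hderiv {s : ℂ} (hs : s.re ∈ Set.Ioc 1 2) :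
        deriv logZetaRatio =ᶠ[𝓝 s] logDeriv zetaRatio := by
      filter_upwards [(isOpen_lt continuous_const continuous_re).mem_nhds hs.1] with z hz
        using (hasDerivAt_logZetaRatio hz).deriv
    interval_cases k
    · simpa only [iteratedDeriv_zero] using! exists_norm_logZetaRatio_le hε
    · obtain ⟨C, -, hC⟩ := exists_norm_logDeriv_zetaRatio_le hε
      refine ⟨C, fun s hs ↦ ?_⟩
      rw [iteratedDeriv_one, (hderiv hs).eq_of_nhds]
      exact hC s (Set.Ioc_subset_Icc_self hs)
    · obtain ⟨C, -, hC⟩ := exists_norm_deriv_logDeriv_zetaRatio_le hε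
      refine ⟨C, fun s hs ↦ ?_⟩
      rw [iteratedDeriv_succ, iteratedDeriv_one, (hderiv hs).deriv_eq]
      exact hC s (Set.Ioc_subset_Icc_self hs)

end LogZeta

section VerticalLine

open Complex MeasureTheory
open scoped FourierTransform

/-- The vertical line `re s = ε`, parametrised so that `exp (v * vline ε w)` oscillates at the
frequency `v` in the normalisation of Mathlib's Fourier transform. -/
noncomputable def vline (ε w : ℝ) : ℂ := ε + (2 * π * w : ℝ) * I

@[simp] lemma vline_re (ε w : ℝ) : (vline ε w).re = ε := by simp [vline]

@[simp] lemma vline_im (ε w : ℝ) : (vline ε w).im = 2 * π * w := by simp [vline]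

@[fun_prop] lemma continuous_vline (ε : ℝ) : Continuous (vline ε) := by unfold vline; fun_prop

lemma hasDerivAt_vline (ε w : ℝ) : HasDerivAt (vline ε) (2 * π * I) w := by
  have hline : vline ε = fun w : ℝ ↦ ε + 2 * π * I * w := by
    funext w
    simp only [vline]
    push_cast
    ring
  rw [hline]
  simpa using (ofRealCLM.hasDerivAt.const_mul (2 * π * I : ℂ)).const_add (ε : ℂ)

lemma integrable_one_add_norm_rpow {a : ℝ} (ha : a < -1) :
    Integrable fun w : ℝ ↦ (1 + ‖w‖) ^ a := by
  simpa using integrable_one_add_norm (E := ℝ) (μ := volume) (r := -a) (by simp; linarith)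

namespace JetGrowthOn

variable {S : Set ℂ} {n k : ℕ} {a ε : ℝ} {f : ℂ → ℂ}

lemma iteratedDeriv_comp_vline (hf : JetGrowthOn S n a f) (hε : ∀ w, vline ε w ∈ S) (k : ℕ) :
    iteratedDeriv k (fun w ↦ f (vline ε w)) =
      fun w ↦ (2 * π * I) ^ k * iteratedDeriv k f (vline ε w) := by
  induction k with
  | zero => simp
  | succ k ih =>
    funext w
    have hdiff : DifferentiableAt ℂ (iteratedDeriv k f) (vline ε w) := by
      rw [iteratedDeriv_eq_iterate]
      exact ((hf.analyticAt _ (hε w)).iterated_deriv k).differentiableAt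
    have hderiv : HasDerivAt (fun w ↦ iteratedDeriv k f (vline ε w))
        (iteratedDeriv (k + 1) f (vline ε w) * (2 * π * I)) w := by
      rw [iteratedDeriv_succ]
      exact hdiff.hasDerivAt.comp w (hasDerivAt_vline ε w)
    rw [iteratedDeriv_succ, ih, (hderiv.const_mul _).deriv]
    ring

lemma contDiff_comp_vline (hf : JetGrowthOn S n a f) (hε : ∀ w, vline ε w ∈ S) (m : ℕ) :
    ContDiff ℝ m fun w ↦ f (vline ε w) := by
  rw [contDiff_iff_contDiffAt]
  have hline : ContDiff ℝ m (vline ε) :=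
    contDiff_const.add
      ((ofRealCLM.contDiff.comp (contDiff_const.mul contDiff_id)).mul contDiff_const)
  exact fun w ↦ (hf.analyticAt _ (hε w)).restrictScalars.contDiffAt.comp w hline.contDiffAt

lemma exists_norm_iteratedDeriv_comp_vline_le (hf : JetGrowthOn S n a f) (ha : a ≤ 0)
    (hk : k ≤ n) : ∃ C, ∀ ε, (∀ w, vline ε w ∈ S) → ∀ w,
      ‖iteratedDeriv k (fun w ↦ f (vline ε w)) w‖ ≤ (2 * π) ^ k * C * (1 + ‖w‖) ^ a := by
  obtain ⟨C, hC⟩ := hf.exists_bound k hk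
  refine ⟨C, fun ε hε w ↦ ?_⟩
  have hbound := hC _ (hε w)
  have hC₀ : 0 ≤ C := nonneg_of_mul_nonneg_left ((norm_nonneg _).trans hbound) (by positivity)
  have hw : ‖w‖ ≤ |(vline ε w).im| := by
    rw [vline_im, abs_mul, abs_of_pos Real.two_pi_pos]
    exact le_mul_of_one_le_left (norm_nonneg w) (by linarith [Real.pi_gt_three])
  have hnorm : ‖(2 * π * I : ℂ)‖ = 2 * π := by simp [abs_of_pos Real.pi_pos]
  rw [hf.iteratedDeriv_comp_vline hε, norm_mul, norm_pow, hnorm, mul_assoc]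
  gcongr
  refine hbound.trans ?_
  gcongr ?_ * ?_
  exact Real.rpow_le_rpow_of_nonpos (by positivity) (by gcongr) ha

lemma integrable_iteratedDeriv_comp_vline (hf : JetGrowthOn S n a f) (ha : a < -1)
    (hε : ∀ w, vline ε w ∈ S) (hk : k ≤ n) :
    Integrable (iteratedDeriv k fun w ↦ f (vline ε w)) := by
  obtain ⟨C, hC⟩ := hf.exists_norm_iteratedDeriv_comp_vline_le (by linarith) hk
  exact ((integrable_one_add_norm_rpow ha).const_mul _).mono'
    ((hf.contDiff_comp_vline hε k).continuous_iteratedDeriv k le_rfl).aestronglyMeasurable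
    (.of_forall (hC ε hε))

lemma integrable_comp_vline (hf : JetGrowthOn S n a f) (ha : a < -1) (hε : ∀ w, vline ε w ∈ S) :
    Integrable fun w ↦ f (vline ε w) := by
  simpa using hf.integrable_iteratedDeriv_comp_vline ha hε n.zero_le

theorem exists_norm_fourier_comp_vline_le (hf : JetGrowthOn S n a f) (ha : a < -1) :
    ∃ C, ∀ ε, (∀ w, vline ε w ∈ S) → ∀ x : ℝ,
      |x| ^ n * ‖𝓕 (fun w ↦ f (vline ε w)) x‖ ≤ C := by
  obtain ⟨C, hC⟩ := hf.exists_norm_iteratedDeriv_comp_vline_le (by linarith) le_rfl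
  refine ⟨C * ∫ w : ℝ, (1 + ‖w‖) ^ a, fun ε hε x ↦ ?_⟩
  set φ : ℝ → ℂ := fun w ↦ f (vline ε w)
  have hφ {k : ℕ} (hk : k ≤ n) : Integrable (iteratedDeriv k φ) :=
    hf.integrable_iteratedDeriv_comp_vline ha hε hk
  have hfourier : 𝓕 (iteratedDeriv n φ) x = (2 * π * I * x) ^ n • 𝓕 φ x := by
    rw [Real.fourier_iteratedDeriv (N := n) (mod_cast hf.contDiff_comp_vline hε n)
      (fun k hk ↦ hφ (mod_cast hk)) le_rfl]
  refine le_of_mul_le_mul_left ?_ (pow_pos Real.two_pi_pos n)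
  calc (2 * π) ^ n * (|x| ^ n * ‖𝓕 φ x‖) = ‖𝓕 (iteratedDeriv n φ) x‖ := by
        rw [hfourier, norm_smul, norm_pow]
        simp only [norm_mul, Complex.norm_ofNat, norm_real, norm_I, mul_one, Real.norm_eq_abs,
          abs_of_pos Real.pi_pos]
        ring
    _ ≤ ∫ w, ‖iteratedDeriv n φ w‖ := VectorFourier.norm_fourierIntegral_le_integral_norm ..
    _ ≤ ∫ w : ℝ, (2 * π) ^ n * C * (1 + ‖w‖) ^ a :=
        integral_mono (hφ le_rfl).norm ((integrable_one_add_norm_rpow ha).const_mul _) (hC ε hε)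
    _ = (2 * π) ^ n * (C * ∫ w : ℝ, (1 + ‖w‖) ^ a) := by rw [integral_const_mul]; ring

end JetGrowthOn

end VerticalLine

section Perron

open Complex MeasureTheory
open scoped FourierTransform

/-- The Laplace transform of `hinge`, whose quadratic decay makes the Perron integrals converge
absolutely. -/
noncomputable def perronKernel (s : ℂ) : ℂ := (s * (s + 1))⁻¹

lemma jetGrowthOn_perronKernel {r : ℝ} (hr : 0 < r) (n : ℕ) :
    JetGrowthOn {s | 0 ≤ s.re ∧ r ≤ ‖s‖} n (-2) perronKernel := by
  have hinv : JetGrowthOn {s | 0 ≤ s.re ∧ r ≤ ‖s‖} n (-1) fun s ↦ s⁻¹ :=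
    (jetGrowthOn_inv hr n).mono fun _ hs ↦ hs.2
  have hshift : JetGrowthOn {s | 0 ≤ s.re ∧ r ≤ ‖s‖} n (-1) fun s ↦ (1 + s)⁻¹ := by
    have := (jetGrowthOn_inv one_pos n).comp_ofReal_add 1
    simp only [ofReal_one] at this
    refine this.mono fun s hs ↦ le_trans ?_ (re_le_norm _)
    simpa using hs.1
  unfold perronKernel
  convert hinv.mul hshift using 1
  · norm_num
  · simp only [mul_inv, add_comm]

/-- The smoothing weight `(1 - e⁻ˣ)₊`. -/
noncomputable def hinge (x : ℝ) : ℝ := max 0 (1 - Real.exp (-x))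

@[fun_prop] lemma continuous_hinge : Continuous hinge := by unfold hinge; fun_prop

lemma hinge_of_nonpos {x : ℝ} (hx : x ≤ 0) : hinge x = 0 :=
  max_eq_left (by linarith [Real.one_le_exp (by linarith : 0 ≤ -x)])

lemma hinge_of_nonneg {x : ℝ} (hx : 0 ≤ x) : hinge x = 1 - Real.exp (-x) :=
  max_eq_right (by linarith [Real.exp_le_one_iff.mpr (by linarith : -x ≤ 0)])

lemma hinge_mul_exp_eq_indicator (ε x : ℝ) :
    ((hinge x * Real.exp (-(ε * x)) : ℝ) : ℂ) = (Set.Ioi (0 : ℝ)).indicator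
      (fun x : ℝ ↦ Complex.exp (-ε * x) - Complex.exp (-(ε + 1) * x)) x := by
  rcases lt_or_ge 0 x with hx | hx
  · rw [Set.indicator_of_mem (Set.mem_Ioi.mpr hx), hinge_of_nonneg hx.le]
    push_cast
    rw [sub_mul, one_mul, ← Complex.exp_add]
    ring_nf
  · rw [Set.indicator_of_notMem (Set.notMem_Ioi.mpr hx), hinge_of_nonpos hx, zero_mul, ofReal_zero]

variable {ε : ℝ}

lemma integrable_hinge_mul_exp (hε : 0 < ε) :
    Integrable fun x : ℝ ↦ ((hinge x * Real.exp (-(ε * x)) : ℝ) : ℂ) := by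
  simp only [hinge_mul_exp_eq_indicator]
  rw [integrable_indicator_iff measurableSet_Ioi]
  exact (integrableOn_exp_mul_complex_Ioi (by simpa using hε) 0).sub
    (integrableOn_exp_mul_complex_Ioi (by simp; linarith) 0)

lemma integral_exp_sub_exp {s : ℂ} (hs : 0 < s.re) :
    ∫ x : ℝ in Set.Ioi 0, (Complex.exp (-s * x) - Complex.exp (-(s + 1) * x)) =
      perronKernel s := by
  have hs₁ : 0 < (s + 1).re := by rw [add_re, one_re]; linarith
  have hre : (-s).re < 0 := by rwa [neg_re, neg_lt_zero]
  have hre₁ : (-(s + 1)).re < 0 := by rwa [neg_re, neg_lt_zero]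
  have hs₀ := ne_zero_of_re_pos hs
  have hs₁₀ := ne_zero_of_re_pos hs₁
  rw [integral_sub (integrableOn_exp_mul_complex_Ioi hre 0)
    (integrableOn_exp_mul_complex_Ioi hre₁ 0), integral_exp_mul_complex_Ioi hre,
    integral_exp_mul_complex_Ioi hre₁, perronKernel]
  simp only [ofReal_zero, mul_zero, Complex.exp_zero]
  field_simp
  ring

lemma fourier_hinge_mul_exp (hε : 0 < ε) (w : ℝ) :
    𝓕 (fun x : ℝ ↦ ((hinge x * Real.exp (-(ε * x)) : ℝ) : ℂ)) w = perronKernel (vline ε w) := by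
  rw [Real.fourier_real_eq_integral_exp_smul, ← integral_exp_sub_exp (by simpa using hε),
    ← integral_indicator measurableSet_Ioi]
  congr with x
  rw [hinge_mul_exp_eq_indicator, ← Set.indicator_smul_apply (Set.Ioi (0 : ℝ))
    (fun x : ℝ ↦ Complex.exp ((-2 * π * x * w : ℝ) * I))]
  congr with y
  rw [smul_eq_mul, mul_sub, ← Complex.exp_add, ← Complex.exp_add, vline]
  push_cast
  ring_nf

lemma integrable_perronKernel_vline (hε : 0 < ε) :
    Integrable fun w ↦ perronKernel (vline ε w) := by
  refine (jetGrowthOn_perronKernel hε 0).integrable_comp_vline (by norm_num) fun w ↦ ?_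
  exact ⟨by simpa using hε.le, by simpa using re_le_norm (vline ε w)⟩

lemma fourierInv_eq_integral_exp_mul (f : ℝ → ℂ) (x : ℝ) :
    𝓕⁻ f x = ∫ w : ℝ, Complex.exp ((2 * π * (w * x) : ℝ) * I) * f w := by
  simp only [Real.fourierInv_eq', RCLike.inner_apply', conj_trivial, smul_eq_mul]

lemma fourierInv_perronKernel_vline (hε : 0 < ε) (x : ℝ) :
    𝓕⁻ (fun w ↦ perronKernel (vline ε w)) x = ((hinge x * Real.exp (-(ε * x)) : ℝ) : ℂ) := by
  have hfourier := funext (fourier_hinge_mul_exp hε)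
  rw [← hfourier]
  refine congrFun
    (Continuous.fourierInv_fourier_eq (by fun_prop) (integrable_hinge_mul_exp hε) ?_) x
  rw [hfourier]
  exact integrable_perronKernel_vline hε

variable {Ω : Type*} [MeasurableSpace Ω] {μ : Measure Ω} {W v : Ω → ℝ}

/-- The Laplace transform at `s` of the mass distribution `W μ`, located at `v`. -/
noncomputable def laplace (μ : Measure Ω) (W v : Ω → ℝ) (s : ℂ) : ℂ :=
  ∫ ω, W ω * Complex.exp (-(s * v ω)) ∂μ

lemma exp_mul_exp_neg_vline (L u w : ℝ) :
    Complex.exp ((2 * π * (w * L) : ℝ) * I) * Complex.exp (-(vline ε w * u)) =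
      Real.exp (-(ε * u)) * Complex.exp ((2 * π * (w * (L - u)) : ℝ) * I) := by
  rw [ofReal_exp, ← Complex.exp_add, ← Complex.exp_add, vline]
  push_cast
  ring_nf

lemma integrable_prod_laplace [SFinite μ] (hv : Measurable v) (hε : 0 < ε)
    (hW : Integrable (fun ω ↦ W ω * Real.exp (-(ε * v ω))) μ) (L : ℝ) :
    Integrable (fun z : Ω × ℝ ↦ Complex.exp ((2 * π * (z.2 * L) : ℝ) * I) *
      (W z.1 * Complex.exp (-(vline ε z.2 * v z.1)) * perronKernel (vline ε z.2)))
      (μ.prod volume) := by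
  have hWc : Integrable (fun ω ↦ ((W ω * Real.exp (-(ε * v ω)) : ℝ) : ℂ)) μ := hW.ofReal
  refine ((hWc.mul_prod (integrable_perronKernel_vline hε)).bdd_mul (c := 1)
    (f := fun z : Ω × ℝ ↦ Complex.exp ((2 * π * (z.2 * (L - v z.1)) : ℝ) * I))
    (Measurable.aestronglyMeasurable (by fun_prop))
    (.of_forall fun z ↦ (norm_exp_ofReal_mul_I _).le)).congr (.of_forall fun z ↦ ?_)
  have := exp_mul_exp_neg_vline (ε := ε) L (v z.1) z.2
  dsimp only
  rw [ofReal_mul (W z.1)]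
  linear_combination -(W z.1 * perronKernel (vline ε z.2)) * this

lemma integrable_laplace_mul_perronKernel [SFinite μ] (hv : Measurable v) (hε : 0 < ε)
    (hW : Integrable (fun ω ↦ W ω * Real.exp (-(ε * v ω))) μ) :
    Integrable fun w ↦ laplace μ W v (vline ε w) * perronKernel (vline ε w) := by
  refine (integrable_prod_laplace hv hε hW 0).integral_prod_right.congr (.of_forall fun w ↦ ?_)
  simp only [mul_zero, ofReal_zero, zero_mul, Complex.exp_zero, one_mul]
  exact integral_mul_const _ _

theorem fourierInv_laplace_mul_perronKernel [SFinite μ] (hv : Measurable v) (hε : 0 < ε)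
    (hW : Integrable (fun ω ↦ W ω * Real.exp (-(ε * v ω))) μ) (L : ℝ) :
    𝓕⁻ (fun w ↦ laplace μ W v (vline ε w) * perronKernel (vline ε w)) L =
      ((Real.exp (-(ε * L)) * ∫ ω, W ω * hinge (L - v ω) ∂μ : ℝ) : ℂ) := by
  have hslice (ω : Ω) : ∫ w : ℝ, Complex.exp ((2 * π * (w * L) : ℝ) * I) *
      (W ω * Complex.exp (-(vline ε w * v ω)) * perronKernel (vline ε w)) =
        ((Real.exp (-(ε * L)) * (W ω * hinge (L - v ω)) : ℝ) : ℂ) := by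
    have hphase (w : ℝ) := exp_mul_exp_neg_vline (ε := ε) L (v ω) w
    have hkernel := fourierInv_perronKernel_vline hε (L - v ω)
    rw [fourierInv_eq_integral_exp_mul] at hkernel
    calc _ = ∫ w : ℝ, ((W ω * Real.exp (-(ε * v ω)) : ℝ) : ℂ) *
          (Complex.exp ((2 * π * (w * (L - v ω)) : ℝ) * I) * perronKernel (vline ε w)) := by
          congr with w
          rw [ofReal_mul (W ω)]
          linear_combination (W ω * perronKernel (vline ε w)) * hphase w
      _ = _ := by
          rw [integral_const_mul, hkernel, ← ofReal_mul,
            show -(ε * L) = -(ε * v ω) + -(ε * (L - v ω)) by ring, Real.exp_add]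
          congr 1
          ring
  rw [fourierInv_eq_integral_exp_mul, ← integral_const_mul, ← integral_complex_ofReal]
  simp only [← hslice]
  rw [integral_integral_swap (integrable_prod_laplace hv hε hW L)]
  congr with w
  rw [integral_const_mul, integral_mul_const, laplace]

end Perron

section PerronRemainder

open Complex Filter Topology

lemma eventually_logZetaRatio_eq_log_zetaRatio :
    ∀ᶠ s in 𝓝 (1 : ℂ), 1 < s.re → logZetaRatio s = Complex.log (zetaRatio s) := by
  have hslit : ∀ᶠ s in 𝓝 (1 : ℂ), zetaRatio s ∈ slitPlane := by
    refine (differentiableAt_zetaRatio one_ne_zero).continuousAt.eventually_mem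
      (isOpen_slitPlane.mem_nhds ?_)
    rw [zetaRatio_one]
    exact one_mem_slitPlane
  obtain ⟨r, hr, hball⟩ := Metric.eventually_nhds_iff_ball.mp hslit
  set U : Set ℂ := Metric.ball 1 r ∩ {s | 1 < s.re} 
  have hUopen : IsOpen U := Metric.isOpen_ball.inter (isOpen_lt continuous_const continuous_re)
  have hUconn : IsPreconnected U :=
    ((convex_ball 1 r).inter (convex_halfSpace_re_gt 1)).isPreconnected
  have hderiv {s : ℂ} (hs : s ∈ U) :
      HasDerivAt (fun z ↦ Complex.log (zetaRatio z)) (logDeriv zetaRatio s) s := by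
    have hs₀ : s ≠ 0 := ne_zero_of_re_pos (zero_lt_one.trans hs.2)
    exact (differentiableAt_zetaRatio hs₀).hasDerivAt.clog (hball s hs.1)
  let x : ℝ := 1 + r / 2
  have hx : 1 < x := by simp only [x]; linarith
  have hxU : (x : ℂ) ∈ U := by
    refine ⟨?_, hx⟩
    simp only [x, Metric.mem_ball, Complex.dist_eq, ofReal_add, ofReal_one, add_sub_cancel_left,
      norm_real, Real.norm_eq_abs]
    rw [abs_of_pos (by linarith)]
    linarith
  have heq : Set.EqOn logZetaRatio (fun z ↦ Complex.log (zetaRatio z)) U := by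
    refine hUopen.eqOn_of_deriv_eq hUconn
      (fun s hs ↦ (hasDerivAt_logZetaRatio hs.2).differentiableAt.differentiableWithinAt)
      (fun s hs ↦ (hderiv hs).differentiableAt.differentiableWithinAt)
      (fun s hs ↦ by rw [(hasDerivAt_logZetaRatio hs.2).deriv, (hderiv hs).deriv]) hxU ?_
    have him := logZetaRatio_im_ofReal hx
    rw [← exp_logZetaRatio hx, Complex.log_exp] <;> rw [him] <;> linarith [Real.pi_pos]
  filter_upwards [Metric.ball_mem_nhds 1 hr] with s hs hs₁ using heq ⟨hs, hs₁⟩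

/-- The error kernel in the Perron formula for the comparison of `∑ logZetaCoeff n / n` with
`∫ (1 - exp (-v)) / v`: the difference of the two Laplace transforms, divided by `s * (s + 1)`. -/
noncomputable def perronRemainder (s : ℂ) : ℂ := logZetaRatio (1 + s) * perronKernel s

lemma exists_jetGrowthOn_perronRemainder_ball (n : ℕ) (a : ℝ) :
    ∃ r > 0, JetGrowthOn (Metric.ball 0 r ∩ {s | 0 < s.re}) n a perronRemainder := by
  let g : ℂ → ℂ := fun z ↦ Complex.log (zetaRatio z)
  have hg : AnalyticAt ℂ g 1 := by
    refine (analyticAt_zetaRatio one_ne_zero).clog ?_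
    rw [zetaRatio_one]
    exact one_mem_slitPlane
  have hslope : AnalyticAt ℂ (fun s ↦ dslope g 1 (1 + s) * (s + 1)⁻¹) 0 := by
    obtain ⟨p, hp⟩ := hg
    have hdslope : AnalyticAt ℂ (dslope g 1) (1 + 0) := by
      simpa using hp.has_fpower_series_dslope_fslope.analyticAt
    exact (hdslope.fun_comp (by fun_prop)).fun_mul (.fun_inv (by fun_prop) (by simp))
  obtain ⟨r, hr, hball⟩ := exists_jetGrowthOn_ball hslope n a
  have htend : Tendsto (fun s : ℂ ↦ 1 + s) (𝓝 0) (𝓝 1) := by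
    simpa using (by fun_prop : Continuous fun s : ℂ ↦ 1 + s).tendsto 0
  obtain ⟨ρ, hρ, hlog⟩ := Metric.eventually_nhds_iff_ball.mp
    (htend.eventually eventually_logZetaRatio_eq_log_zetaRatio)
  refine ⟨min r ρ, lt_min hr hρ, (hball.mono fun s hs ↦ ?_).congr fun s hs ↦ ?_⟩
  · exact Metric.ball_subset_ball (min_le_left _ _) hs.1
  have hU : Metric.ball 0 (min r ρ) ∩ {s : ℂ | 0 < s.re} ∈ 𝓝 s :=
    (Metric.isOpen_ball.inter (isOpen_lt continuous_const continuous_re)).mem_nhds hs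
  filter_upwards [hU] with z hz
  have hz₀ : z ≠ 0 := ne_zero_of_re_pos hz.2
  rw [perronRemainder, perronKernel, hlog z (Metric.ball_subset_ball (min_le_right _ _) hz.1)
    (by simpa using hz.2), dslope_of_ne _ (by simpa using hz₀), slope_def_field]
  simp only [g, zetaRatio_one, Complex.log_one]
  rw [sub_zero, add_sub_cancel_left, mul_inv]
  ring

theorem jetGrowthOn_perronRemainder :
    JetGrowthOn {s | s.re ∈ Set.Ioc 0 1} 2 (-3 / 2) perronRemainder := by
  obtain ⟨r, hr, hnear⟩ := exists_jetGrowthOn_perronRemainder_ball 2 (-3 / 2)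
  have hlog := (jetGrowthOn_logZetaRatio (ε := 1 / 2) (by norm_num)).comp_ofReal_add 1
  have hfar : JetGrowthOn {s | s.re ∈ Set.Ioc 0 1 ∧ r ≤ ‖s‖} 2 (1 / 2 + -2) perronRemainder := by
    simp only [ofReal_one] at hlog
    refine (hlog.mono fun s hs ↦ ?_).mul ((jetGrowthOn_perronKernel hr 2).mono fun s hs ↦ ?_)
    · have : s.re ≤ 1 := hs.1.2
      refine ⟨by simpa using hs.1.1, ?_⟩
      rw [add_re, one_re]
      linarith
    · exact ⟨hs.1.1.le, hs.2⟩
  rw [show (1 / 2 + -2 : ℝ) = -3 / 2 by norm_num] at hfar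
  refine (hnear.union hfar).mono fun s hs ↦ ?_
  rcases lt_or_ge ‖s‖ r with hsr | hsr
  · exact .inl ⟨mem_ball_zero_iff.mpr hsr, hs.1⟩
  · exact .inr ⟨hs, hsr⟩

end PerronRemainder

section LogDensity

open Complex MeasureTheory

/-- The density `(1 - e⁻ᵛ) / v` whose Laplace transform is `log (1 + s) - log s`; it models the
distribution of the prime powers on the logarithmic scale. Its value at `0` is the junk value `0`
instead of the limit `1`. -/
noncomputable def logDensity (v : ℝ) : ℝ := (1 - Real.exp (-v)) / v

@[fun_prop] lemma measurable_logDensity : Measurable logDensity := by unfold logDensity; fun_prop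

lemma norm_logDensity_le_one {v : ℝ} (hv : 0 < v) : ‖logDensity v‖ ≤ 1 := by
  have hexp : Real.exp (-v) ≤ 1 := Real.exp_le_one_iff.mpr (by linarith)
  rw [logDensity, Real.norm_of_nonneg (div_nonneg (by linarith) hv.le), div_le_one hv]
  linarith [Real.add_one_le_exp (-v)]

lemma integrable_logDensity_mul_exp {ε : ℝ} (hε : 0 < ε) :
    Integrable (fun v ↦ logDensity v * Real.exp (-(ε * v))) (volume.restrict (Set.Ioi 0)) := by
  refine (integrableOn_exp_mul_Ioi (by linarith : -ε < 0) 0).mono'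
    (Measurable.aestronglyMeasurable (by fun_prop)) ?_
  refine (ae_restrict_iff' measurableSet_Ioi).mpr (.of_forall fun v hv ↦ ?_)
  rw [norm_mul, Real.norm_of_nonneg (Real.exp_pos _).le, neg_mul]
  exact mul_le_of_le_one_left (Real.exp_pos _).le (norm_logDensity_le_one hv)

lemma integral_exp_neg_add_mul (s : ℂ) {v : ℝ} (hv : v ≠ 0) :
    ∫ y in (0 : ℝ)..1, Complex.exp (-(s + y) * v) = logDensity v * Complex.exp (-(s * v)) := by
  have hv₀ : (v : ℂ) ≠ 0 := mod_cast hv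
  have hderiv (y : ℝ) : HasDerivAt (fun y : ℝ ↦ -Complex.exp (-(s + y) * v) / v)
      (Complex.exp (-(s + y) * v)) y := by
    have hlin : HasDerivAt (fun y : ℝ ↦ -(s + (y : ℂ)) * v) (-1 * v) y :=
      (ofRealCLM.hasDerivAt.const_add s).neg.mul_const (v : ℂ)
    refine (hlin.cexp.neg.div_const (v : ℂ)).congr_deriv ?_
    field_simp
  have hexp : Complex.exp (-(s + 1) * v) = Complex.exp (-v) * Complex.exp (-(s * v)) := by
    rw [← Complex.exp_add]
    ring_nf
  rw [intervalIntegral.integral_eq_sub_of_hasDerivAt (fun y _ ↦ hderiv y)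
    (Continuous.intervalIntegrable (by fun_prop) _ _), logDensity]
  push_cast
  rw [hexp, add_zero, neg_mul]
  field_simp
  ring

variable {s : ℂ}

lemma integral_inv_add (hs : 0 < s.re) :
    ∫ y in (0 : ℝ)..1, (s + y)⁻¹ = Complex.log (1 + s) - Complex.log s := by
  have hpos {y : ℝ} (hy : y ∈ Set.uIcc 0 1) : 0 < (s + y).re := by
    rw [Set.uIcc_of_le zero_le_one] at hy
    rw [add_re, ofReal_re]
    linarith [hy.1]
  have hderiv (y : ℝ) (hy : y ∈ Set.uIcc 0 1) :
      HasDerivAt (fun y : ℝ ↦ Complex.log (s + y)) (s + y)⁻¹ y := by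
    have hlin : HasDerivAt (fun y : ℝ ↦ s + (y : ℂ)) 1 y := ofRealCLM.hasDerivAt.const_add s
    simpa only [one_div] using hlin.clog_real (.inl (hpos hy))
  rw [intervalIntegral.integral_eq_sub_of_hasDerivAt hderiv]
  · rw [ofReal_zero, ofReal_one, add_zero, add_comm]
  · exact ContinuousOn.intervalIntegrable
      (.inv₀ (by fun_prop) fun y hy ↦ ne_zero_of_re_pos (hpos hy))

lemma integrable_exp_neg_add_mul (hs : 0 < s.re) :
    Integrable (fun z : ℝ × ℝ ↦ Complex.exp (-(s + z.2) * z.1))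
      ((volume.restrict (Set.Ioi 0)).prod (volume.restrict (Set.Ioc 0 1))) := by
  have hdom : Integrable (fun z : ℝ × ℝ ↦ Real.exp (-s.re * z.1) * (1 : ℝ))
      ((volume.restrict (Set.Ioi 0)).prod (volume.restrict (Set.Ioc 0 1))) :=
    .mul_prod (integrableOn_exp_mul_Ioi (by linarith) 0) (integrable_const (1 : ℝ))
  refine hdom.mono' (Continuous.aestronglyMeasurable (by fun_prop)) ?_
  rw [Measure.prod_restrict]
  refine (ae_restrict_iff' (measurableSet_Ioi.prod measurableSet_Ioc)).mpr
    (.of_forall fun z ⟨(hv : 0 < z.1), (hy : 0 < z.2 ∧ _)⟩ ↦ ?_)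
  have hre : (-(s + z.2) * z.1).re = -s.re * z.1 - z.2 * z.1 := by
    simp only [mul_re, neg_re, add_re, ofReal_re, ofReal_im, mul_zero, sub_zero]
    ring
  rw [Complex.norm_exp, mul_one, Real.exp_le_exp, hre]
  linarith [mul_pos hy.1 hv]

theorem laplace_logDensity (hs : 0 < s.re) :
    laplace (volume.restrict (Set.Ioi 0)) logDensity id s =
      Complex.log (1 + s) - Complex.log s := by
  calc laplace (volume.restrict (Set.Ioi 0)) logDensity id s
      = ∫ v in Set.Ioi (0 : ℝ), ∫ y in Set.Ioc (0 : ℝ) 1, Complex.exp (-(s + y) * v) := by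
        refine setIntegral_congr_fun measurableSet_Ioi fun v (hv : 0 < v) ↦ ?_
        rw [id, ← integral_exp_neg_add_mul s hv.ne', intervalIntegral.integral_of_le zero_le_one]
    _ = ∫ y in Set.Ioc (0 : ℝ) 1, ∫ v in Set.Ioi (0 : ℝ), Complex.exp (-(s + y) * v) :=
        integral_integral_swap (integrable_exp_neg_add_mul hs)
    _ = ∫ y in (0 : ℝ)..1, (s + y)⁻¹ := by
        rw [intervalIntegral.integral_of_le zero_le_one]
        refine setIntegral_congr_fun measurableSet_Ioc fun y hy ↦ ?_
        have hre : (-(s + y)).re < 0 := by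
          rw [neg_re, add_re, ofReal_re]
          linarith [hy.1]
        rw [integral_exp_mul_complex_Ioi hre, ofReal_zero, mul_zero, Complex.exp_zero,
          neg_div_neg_eq, one_div]
    _ = Complex.log (1 + s) - Complex.log s := integral_inv_add hs

end LogDensity

section Comparison

open Complex MeasureTheory Filter Topology
open scoped FourierTransform

lemma term_logZetaCoeff (s : ℂ) (n : ℕ) :
    LSeries.term (fun n ↦ (logZetaCoeff n : ℂ)) (1 + s) n =
      ((logZetaCoeff n / n : ℝ) : ℂ) * Complex.exp (-(s * Real.log n)) := by
  rcases eq_or_ne n 0 with rfl | hn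
  · simp
  have hn₀ : (n : ℂ) ≠ 0 := mod_cast hn
  rw [LSeries.term_of_ne_zero hn, cpow_add _ _ hn₀, cpow_one, cpow_def_of_ne_zero hn₀,
    ← natCast_log, Complex.exp_neg, mul_comm (Real.log n : ℂ) s]
  push_cast
  field_simp

lemma integrable_logZetaCoeff_mul_exp {ε : ℝ} (hε : 0 < ε) :
    Integrable (fun n : ℕ ↦ logZetaCoeff n / n * Real.exp (-(ε * Real.log n)))
      Measure.count := by
  rw [integrable_count_iff]
  refine (lseriesSummable_logZetaCoeff (s := 1 + ε) (by simpa using hε)).norm.congr fun n ↦ ?_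
  rw [term_logZetaCoeff, ← norm_real]
  push_cast
  rfl

lemma laplace_logZetaCoeff {s : ℂ} (hs : 0 < s.re) :
    laplace Measure.count (fun n : ℕ ↦ logZetaCoeff n / n) (fun n ↦ Real.log n) s =
      logZeta (1 + s) := by
  simp only [laplace, ← term_logZetaCoeff]
  rw [integral_countable (integrable_count_iff.mpr
    (lseriesSummable_logZetaCoeff (by simpa using hs)).norm)]
  simp [logZeta, LSeries]

lemma perronRemainder_eq_laplace_sub {s : ℂ} (hs : 0 < s.re) :
    perronRemainder s =
      laplace Measure.count (fun n : ℕ ↦ logZetaCoeff n / n) (fun n ↦ Real.log n) s *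
          perronKernel s -
        laplace (volume.restrict (Set.Ioi 0)) logDensity id s * perronKernel s := by
  rw [laplace_logZetaCoeff hs, laplace_logDensity hs, perronRemainder, logZetaRatio,
    add_sub_cancel_left, sub_mul]

lemma fourierInv_sub_of_integrable {f g : ℝ → ℂ} (hf : Integrable f) (hg : Integrable g) (x : ℝ) :
    𝓕⁻ (fun w ↦ f w - g w) x = 𝓕⁻ f x - 𝓕⁻ g x := by
  have hexp {h : ℝ → ℂ} (hh : Integrable h) :
      Integrable fun w : ℝ ↦ Complex.exp ((2 * π * (w * x) : ℝ) * I) * h w :=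
    hh.bdd_mul (c := 1) (Continuous.aestronglyMeasurable (by fun_prop))
      (.of_forall fun w ↦ (norm_exp_ofReal_mul_I _).le)
  simp only [fourierInv_eq_integral_exp_mul, mul_sub]
  exact integral_sub (hexp hf) (hexp hg)

lemma fourierInv_perronRemainder_vline {ε : ℝ} (hε : 0 < ε) (L : ℝ) :
    𝓕⁻ (fun w ↦ perronRemainder (vline ε w)) L = ((Real.exp (-(ε * L)) *
      (∫ n : ℕ, logZetaCoeff n / n * hinge (L - Real.log n) ∂Measure.count -
        ∫ v in Set.Ioi 0, logDensity v * hinge (L - v)) : ℝ) : ℂ) := by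
  have hlog : Measurable fun n : ℕ ↦ Real.log n := measurable_from_nat
  have hcoeff := integrable_logZetaCoeff_mul_exp hε
  have hdensity := integrable_logDensity_mul_exp hε
  have hsplit (w : ℝ) := perronRemainder_eq_laplace_sub (s := vline ε w) (by simpa using hε)
  simp only [hsplit]
  rw [fourierInv_sub_of_integrable (integrable_laplace_mul_perronKernel hlog hε hcoeff)
    (integrable_laplace_mul_perronKernel measurable_id hε hdensity),
    fourierInv_laplace_mul_perronKernel hlog hε hcoeff,
    fourierInv_laplace_mul_perronKernel measurable_id hε hdensity, ← ofReal_sub, ← mul_sub]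
  rfl

theorem exists_sq_mul_abs_integral_sub_integral_le :
    ∃ C, ∀ L : ℝ, L ^ 2 *
      |∫ n : ℕ, logZetaCoeff n / n * hinge (L - Real.log n) ∂Measure.count -
        ∫ v in Set.Ioi 0, logDensity v * hinge (L - v)| ≤ C := by
  obtain ⟨C, hC⟩ := jetGrowthOn_perronRemainder.exists_norm_fourier_comp_vline_le (by norm_num)
  refine ⟨C, fun L ↦ ?_⟩
  set B := ∫ n : ℕ, logZetaCoeff n / n * hinge (L - Real.log n) ∂Measure.count -
    ∫ v in Set.Ioi 0, logDensity v * hinge (L - v)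
  have hshift (ε : ℝ) (hε : ε ∈ Set.Ioc 0 1) : L ^ 2 * (Real.exp (-(ε * L)) * |B|) ≤ C := by
    have hbound := hC ε (fun w ↦ by simpa using hε) (-L)
    rwa [← Real.fourierInv_eq_fourier_neg, fourierInv_perronRemainder_vline hε.1, norm_real,
      norm_mul, Real.norm_of_nonneg (Real.exp_pos _).le, abs_neg, sq_abs] at hbound
  have hlim : Tendsto (fun ε : ℝ ↦ L ^ 2 * (Real.exp (-(ε * L)) * |B|)) (𝓝[>] 0)
      (𝓝 (L ^ 2 * |B|)) := by
    have hcont : Continuous fun ε : ℝ ↦ L ^ 2 * (Real.exp (-(ε * L)) * |B|) := by fun_prop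
    simpa using (hcont.tendsto 0).mono_left nhdsWithin_le_nhds
  refine le_of_tendsto hlim ?_
  filter_upwards [Ioc_mem_nhdsGT (zero_lt_one' ℝ)] with ε hε using hshift ε hε

/-- The partial sum of `log ζ` at `1` over `n ≤ X`, smoothed by the weights `1 - n / X`. -/
noncomputable def smoothedLogZeta (X : ℝ) : ℝ :=
  ∑ n ∈ range (⌊X⌋₊ + 1), logZetaCoeff n / n * (1 - n / X)

lemma hinge_log_sub_log {x y : ℝ} (hy : 0 < y) (hyx : y ≤ x) :
    hinge (Real.log x - Real.log y) = 1 - y / x := by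
  rw [hinge_of_nonneg (sub_nonneg.mpr (Real.log_le_log hy hyx)), neg_sub, Real.exp_sub,
    Real.exp_log hy, Real.exp_log (hy.trans_le hyx)]

lemma integral_logZetaCoeff_mul_hinge {X : ℝ} (hX : 0 < X) :
    ∫ n : ℕ, logZetaCoeff n / n * hinge (Real.log X - Real.log n) ∂Measure.count =
      smoothedLogZeta X := by
  have hzero : ∀ n ∉ range (⌊X⌋₊ + 1),
      logZetaCoeff n / n * hinge (Real.log X - Real.log n) = 0 := fun n hn ↦ by
    have hXn : X < n := (Nat.floor_lt hX.le).mp (by rwa [mem_range_succ_iff, not_le] at hn)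
    rw [hinge_of_nonpos (sub_nonpos.mpr (Real.log_le_log hX hXn.le)), mul_zero]
  have hsumm : Summable fun n : ℕ ↦ ‖logZetaCoeff n / n * hinge (Real.log X - Real.log n)‖ :=
    summable_of_ne_finset_zero fun n hn ↦ by rw [hzero n hn, norm_zero]
  rw [integral_countable (integrable_count_iff.mpr hsumm)]
  simp only [count_real_singleton, one_smul]
  rw [tsum_eq_sum hzero, smoothedLogZeta]
  refine sum_congr rfl fun n hn ↦ ?_
  rcases n.eq_zero_or_pos with rfl | hn₀
  · simp
  rw [hinge_log_sub_log (mod_cast hn₀) ((Nat.le_floor_iff hX.le).mp (mem_range_succ_iff.mp hn))]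

theorem exists_integral_sub_le_smoothedLogZeta :
    ∃ C ≥ 0, ∀ X > 1, (∫ v in Set.Ioi 0, logDensity v * hinge (Real.log X - v)) -
      C / Real.log X ^ 2 ≤ smoothedLogZeta X := by
  obtain ⟨C, hC⟩ := exists_sq_mul_abs_integral_sub_integral_le
  refine ⟨C, le_trans (by positivity) (hC 0), fun X hX ↦ ?_⟩
  have hlog := Real.log_pos hX
  have hdiff := hC (Real.log X)
  rw [integral_logZetaCoeff_mul_hinge (one_pos.trans hX), mul_comm,
    ← le_div_iff₀ (by positivity)] at hdiff
  linarith [(abs_le.mp hdiff).1]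

end Comparison

section MainTerm

open Complex Filter MeasureTheory Topology

lemma integrableOn_log_mul_exp_neg :
    IntegrableOn (fun v : ℝ ↦ Real.log v * Real.exp (-v)) (Set.Ioi 0) := by
  have hmellin : MellinConvergent (fun t : ℝ ↦ Real.log t • ((Real.exp (-t) : ℝ) : ℂ)) 1 := by
    refine (mellin_hasDerivAt_of_isBigO_rpow (a := 2) (b := 0) ?_ ?_ (by norm_num)
      ?_ (by norm_num)).1
    · exact (Continuous.continuousOn (by fun_prop)).locallyIntegrableOn measurableSet_Ioi
    · rw [isBigO_ofReal_left]
      simpa only [neg_one_mul] using (isLittleO_exp_neg_mul_rpow_atTop zero_lt_one _).isBigO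
    · simp_rw [neg_zero, Real.rpow_zero]
      exact Tendsto.isBigO_one ℝ
        (Continuous.continuousWithinAt (f := fun v : ℝ ↦ (Real.exp (-v) : ℂ)) (by fun_prop))
  refine (Integrable.re hmellin).congr (.of_forall fun v ↦ ?_)
  simp [-Complex.ofReal_exp]

-- The left-hand side is `Γ'(1)`, by differentiation under the integral sign.
lemma integral_log_mul_exp_neg :
    ∫ v in Set.Ioi 0, Real.log v * Real.exp (-v) = -eulerMascheroniConstant := by
  have hGamma : Complex.Gamma =ᶠ[𝓝 1] GammaIntegral := by
    filter_upwards [(isOpen_lt continuous_const continuous_re).mem_nhds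
      (by simp : (0 : ℝ) < (1 : ℂ).re)] with s hs using Complex.Gamma_eq_integral hs
  have hderiv := ((hasDerivAt_GammaIntegral (s := 1) (by simp)).congr_of_eventuallyEq hGamma).unique
    hasDerivAt_Gamma_one
  simp only [sub_self, cpow_zero, one_mul] at hderiv
  simp only [← ofReal_mul] at hderiv
  rw [integral_complex_ofReal] at hderiv
  exact_mod_cast hderiv

lemma intervalIntegrable_logDensity {L : ℝ} (hL : 0 ≤ L) :
    IntervalIntegrable logDensity volume 0 L := by
  refine (intervalIntegrable_const (c := (1 : ℝ))).mono_fun'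
    (Measurable.aestronglyMeasurable (by fun_prop)) ?_
  rw [Set.uIoc_of_le hL]
  exact (ae_restrict_iff' measurableSet_Ioc).mpr
    (.of_forall fun v hv ↦ norm_logDensity_le_one hv.1)

lemma intervalIntegrable_logDensity_mul_exp {L : ℝ} (hL : 0 ≤ L) :
    IntervalIntegrable (fun v ↦ logDensity v * Real.exp v) volume 0 L :=
  (intervalIntegrable_logDensity hL).mul_continuousOn (by fun_prop)

lemma continuous_one_sub_exp_neg_mul_log :
    Continuous fun v : ℝ ↦ (1 - Real.exp (-v)) * Real.log v := by
  refine continuous_iff_continuousAt.mpr fun v ↦ ?_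
  rcases eq_or_ne v 0 with rfl | hv
  · have hslope : (fun v : ℝ ↦ (1 - Real.exp (-v)) * Real.log v) =
        fun v ↦ dslope (fun v : ℝ ↦ 1 - Real.exp (-v)) 0 v * (v * Real.log v) := by
      funext v
      have hv := sub_smul_dslope (fun v : ℝ ↦ 1 - Real.exp (-v)) 0 v
      simp only [smul_eq_mul, sub_zero, neg_zero, Real.exp_zero, sub_self] at hv
      rw [← hv]
      ring
    rw [hslope]
    exact (continuousAt_dslope_same.mpr (by fun_prop)).mul continuous_mul_log.continuousAt
  · exact ContinuousAt.mul (by fun_prop) (continuousAt_log hv)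

variable {L : ℝ}

lemma integral_log_mul_exp_neg_add_integral_logDensity (hL : 0 ≤ L) :
    (∫ v in (0 : ℝ)..L, Real.log v * Real.exp (-v)) + ∫ v in (0 : ℝ)..L, logDensity v =
      (1 - Real.exp (-L)) * Real.log L := by
  have hint : IntervalIntegrable (fun v : ℝ ↦ Real.log v * Real.exp (-v)) volume 0 L :=
    (intervalIntegrable_iff_integrableOn_Ioc_of_le hL).mpr
      (integrableOn_log_mul_exp_neg.mono_set Set.Ioc_subset_Ioi_self)
  have hderiv (v : ℝ) (hv : v ∈ Set.Ioo 0 L) :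
      HasDerivAt (fun v : ℝ ↦ (1 - Real.exp (-v)) * Real.log v)
        (Real.log v * Real.exp (-v) + logDensity v) v := by
    refine (((hasDerivAt_neg v).exp.const_sub 1).fun_mul
      (Real.hasDerivAt_log hv.1.ne')).congr_deriv ?_
    rw [logDensity, div_eq_mul_inv]
    ring
  rw [← intervalIntegral.integral_add hint (intervalIntegrable_logDensity hL),
    intervalIntegral.integral_eq_sub_of_hasDerivAt_of_le hL
      continuous_one_sub_exp_neg_mul_log.continuousOn hderiv
      (hint.add (intervalIntegrable_logDensity hL)),
    neg_zero, Real.exp_zero, sub_self, zero_mul, sub_zero]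

lemma log_mul_exp_neg_le_integral_Ioi (hL : 0 < L) :
    Real.log L * Real.exp (-L) ≤ ∫ v in Set.Ioi L, Real.log v * Real.exp (-v) := by
  rw [← integral_exp_neg_Ioi L, ← integral_const_mul]
  refine setIntegral_mono_on ((integrableOn_exp_neg_Ioi L).const_mul _)
    (integrableOn_log_mul_exp_neg.mono_set (Set.Ioi_subset_Ioi hL.le)) measurableSet_Ioi
    fun v hv ↦ ?_
  gcongr
  exact hv.le

lemma log_add_eulerMascheroniConstant_le_integral_logDensity (hL : 0 < L) :
    Real.log L + eulerMascheroniConstant ≤ ∫ v in (0 : ℝ)..L, logDensity v := by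
  have hsplit := intervalIntegral.integral_interval_add_Ioi integrableOn_log_mul_exp_neg
    (integrableOn_log_mul_exp_neg.mono_set (Set.Ioi_subset_Ioi hL.le))
  rw [integral_log_mul_exp_neg] at hsplit
  linarith [integral_log_mul_exp_neg_add_integral_logDensity hL.le,
    log_mul_exp_neg_le_integral_Ioi hL]

-- Expand `L² = (v + (L - v))²` and divide by `v`.
lemma sq_mul_logDensity_le {v : ℝ} (hv : 0 < v) (hvL : v ≤ L) :
    L ^ 2 * logDensity v ≤ L + (L - v) + (L - v) ^ 2 := by
  have hexpand : L ^ 2 * logDensity v =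
      (L + (L - v)) * (1 - Real.exp (-v)) + (L - v) ^ 2 * logDensity v := by
    rw [logDensity]
    field_simp
    ring
  have hdensity : logDensity v ≤ 1 := (le_abs_self _).trans (norm_logDensity_le_one hv)
  rw [hexpand]
  gcongr
  · exact mul_le_of_le_one_right (by linarith) (by linarith [Real.exp_pos (-v)])
  · exact mul_le_of_le_one_right (sq_nonneg _) hdensity

lemma integral_logDensity_mul_exp_le (hL : 0 < L) :
    ∫ v in (0 : ℝ)..L, logDensity v * Real.exp v ≤ Real.exp L * (1 / L + 3 / L ^ 2) := by
  have hderiv (v : ℝ) :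
      HasDerivAt (fun v ↦ ((L - v) ^ 2 + 3 * (L - v) + L + 3) * Real.exp v)
        ((L + (L - v) + (L - v) ^ 2) * Real.exp v) v := by
    have hlin : HasDerivAt (fun v ↦ L - v) (-1) v := (hasDerivAt_id v).const_sub L
    refine (((((hlin.fun_pow 2).fun_add (hlin.const_mul 3)).add_const L).add_const 3).fun_mul
      (Real.hasDerivAt_exp v)).congr_deriv ?_
    push_cast
    ring
  have hsq : L ^ 2 * ∫ v in (0 : ℝ)..L, logDensity v * Real.exp v ≤ (L + 3) * Real.exp L := by
    calc L ^ 2 * ∫ v in (0 : ℝ)..L, logDensity v * Real.exp v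
        = ∫ v in (0 : ℝ)..L, L ^ 2 * (logDensity v * Real.exp v) :=
          (intervalIntegral.integral_const_mul ..).symm
      _ ≤ ∫ v in (0 : ℝ)..L, (L + (L - v) + (L - v) ^ 2) * Real.exp v := by
          refine intervalIntegral.integral_mono_on_of_le_Ioo hL.le
            ((intervalIntegrable_logDensity_mul_exp hL.le).const_mul _)
            (Continuous.intervalIntegrable (by fun_prop) _ _) fun v hv ↦ ?_
          rw [← mul_assoc]
          gcongr
          exact sq_mul_logDensity_le hv.1 hv.2.le
      _ = (L + 3) * Real.exp L - (L ^ 2 + 4 * L + 3) := by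
          rw [intervalIntegral.integral_eq_sub_of_hasDerivAt (fun v _ ↦ hderiv v)
            (Continuous.intervalIntegrable (by fun_prop) _ _), Real.exp_zero]
          ring
      _ ≤ (L + 3) * Real.exp L := sub_le_self _ (by positivity)
  calc ∫ v in (0 : ℝ)..L, logDensity v * Real.exp v
      ≤ (L + 3) * Real.exp L / L ^ 2 := (le_div_iff₀' (by positivity)).mpr hsq
    _ = Real.exp L * (1 / L + 3 / L ^ 2) := by field_simp

lemma integral_logDensity_mul_hinge (hL : 0 ≤ L) :
    ∫ v in Set.Ioi 0, logDensity v * hinge (L - v) =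
      (∫ v in (0 : ℝ)..L, logDensity v) -
        Real.exp (-L) * ∫ v in (0 : ℝ)..L, logDensity v * Real.exp v := by
  rw [← intervalIntegral.integral_const_mul, ← intervalIntegral.integral_sub
    (intervalIntegrable_logDensity hL) ((intervalIntegrable_logDensity_mul_exp hL).const_mul _),
    intervalIntegral.integral_of_le hL, setIntegral_eq_of_subset_of_forall_sdiff_eq_zero
      measurableSet_Ioi (Set.Ioc_subset_Ioi_self : Set.Ioc 0 L ⊆ Set.Ioi 0)]
  · refine setIntegral_congr_fun measurableSet_Ioc fun v hv ↦ ?_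
    rw [hinge_of_nonneg (by linarith [hv.2]), neg_sub, sub_eq_neg_add v, Real.exp_add]
    ring
  · rintro v ⟨hv₀, hvL⟩
    have hLv : L < v := not_le.mp fun hle ↦ hvL ⟨hv₀, hle⟩
    rw [hinge_of_nonpos (by linarith), mul_zero]

theorem log_add_eulerMascheroniConstant_sub_le_integral_logDensity_mul_hinge (hL : 0 < L) :
    Real.log L + eulerMascheroniConstant - (1 / L + 3 / L ^ 2) ≤
      ∫ v in Set.Ioi 0, logDensity v * hinge (L - v) := by
  rw [integral_logDensity_mul_hinge hL.le]
  gcongr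
  · exact log_add_eulerMascheroniConstant_le_integral_logDensity hL
  · rw [Real.exp_neg, inv_mul_le_iff₀ (Real.exp_pos L)]
    exact integral_logDensity_mul_exp_le hL

end MainTerm

section EulerProduct

open scoped ArithmeticFunction.vonMangoldt

lemma logZetaCoeff_prime_pow {p k : ℕ} (hp : p.Prime) (hk : k ≠ 0) :
    logZetaCoeff (p ^ k) = 1 / k := by
  have hlog : Real.log p ≠ 0 := (Real.log_pos (mod_cast hp.one_lt)).ne'
  rw [logZetaCoeff, ArithmeticFunction.vonMangoldt_apply_pow hk,
    ArithmeticFunction.vonMangoldt_apply_prime hp, Nat.cast_pow, Real.log_pow]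
  field_simp

lemma logZetaCoeff_eq_zero_of_not_isPrimePow {n : ℕ} (hn : ¬IsPrimePow n) :
    logZetaCoeff n = 0 := by
  rw [logZetaCoeff, ArithmeticFunction.vonMangoldt_eq_zero_iff.mpr hn, zero_div]

lemma one_sub_pow_div_le {p k : ℕ} {X : ℝ} (hp : 2 ≤ p) (hk : k ≠ 0) (hpX : p ≤ X) :
    1 - p ^ k / X ≤ (1 - p / X) ^ k := by
  have hp₀ : (0 : ℝ) < p := by positivity
  have hX : 0 < X := hp₀.trans_le hpX
  have hratio : p / X ≤ 1 := (div_le_one hX).mpr hpX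
  have hmul : (k * p : ℝ) ≤ p ^ k := by
    obtain ⟨j, rfl⟩ := Nat.exists_eq_succ_of_ne_zero hk
    rw [pow_succ]
    gcongr
    exact_mod_cast (Nat.lt_pow_self hp : j < p ^ j)
  calc 1 - p ^ k / X ≤ 1 - k * p / X := by gcongr
    _ = 1 + k * (-(p / X)) := by ring
    _ ≤ (1 - p / X) ^ k := one_add_mul_le_pow (by linarith) k

lemma logZetaCoeff_prime_pow_div_mul_le {p k : ℕ} {X : ℝ} (hp : p.Prime) (hk : k ≠ 0)
    (hpX : p ≤ X) :
    logZetaCoeff (p ^ k) / (p ^ k : ℕ) * (1 - (p ^ k : ℕ) / X) ≤ ((1 - p / X) / p) ^ k / k := by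
  rw [logZetaCoeff_prime_pow hp hk, Nat.cast_pow, div_pow, div_div, div_div,
    mul_comm ((p : ℝ) ^ k), one_div_mul_eq_div]
  gcongr
  exact one_sub_pow_div_le hp.two_le hk hpX

lemma sum_pow_div_le_neg_log {u : ℝ} (hu : u ∈ Set.Ico 0 1) (N : ℕ) :
    ∑ k ∈ Icc 1 N, u ^ k / k ≤ -Real.log (1 - u) := by
  have hsum := hasSum_pow_div_log_of_abs_lt_one (abs_lt.mpr ⟨by linarith [hu.1], hu.2⟩)
  have hnonneg (k : ℕ) : 0 ≤ u ^ (k + 1) / (k + 1) :=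
    div_nonneg (pow_nonneg hu.1 _) (by positivity)
  rw [← Ico_add_one_right_eq_Icc, sum_Ico_eq_sum_range, Nat.add_sub_cancel]
  simpa [add_comm] using sum_le_hasSum (range N) (fun k _ ↦ hnonneg k) hsum

lemma one_sub_div_div_mem_Ico {p : ℕ} {X : ℝ} (hp : p.Prime) (hpX : p ≤ X) :
    (1 - p / X) / p ∈ Set.Ico 0 1 := by
  have hp₁ : (1 : ℝ) < p := mod_cast hp.one_lt
  have hX : 0 < X := by linarith
  have hratio : p / X ≤ 1 := (div_le_one hX).mpr hpX
  refine ⟨div_nonneg (by linarith) (by linarith), (div_lt_one (by linarith)).mpr ?_⟩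
  linarith [div_nonneg p.cast_nonneg hX.le]

variable {X : ℝ}

lemma le_of_mem_primes (hX : 0 ≤ X) {p : ℕ} (hp : p ∈ (range (⌊X⌋₊ + 1)).filter Nat.Prime) :
    (p : ℝ) ≤ X :=
  (Nat.le_floor_iff hX).mp (mem_range_succ_iff.mp (mem_filter.mp hp).1)

lemma smoothedLogZeta_eq_sum_isPrimePow (X : ℝ) :
    smoothedLogZeta X =
      ∑ n ∈ Ioc 0 ⌊X⌋₊ with IsPrimePow n, logZetaCoeff n / n * (1 - n / X) := by
  have hfilter : (Ioc 0 ⌊X⌋₊).filter IsPrimePow = (range (⌊X⌋₊ + 1)).filter IsPrimePow := by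
    ext n
    simp only [mem_filter, mem_Ioc, mem_range_succ_iff]
    exact ⟨fun h ↦ ⟨h.1.2, h.2⟩, fun h ↦ ⟨⟨h.2.pos, h.1⟩, h.2⟩⟩
  rw [hfilter, sum_filter_of_ne fun n _ hne ↦ ?_, smoothedLogZeta]
  contrapose! hne
  rw [logZetaCoeff_eq_zero_of_not_isPrimePow hne, zero_div, zero_mul]

lemma primes_le_rpow_one_div_subset (hX : 1 ≤ X) {k : ℕ} (hk : 1 ≤ k) :
    (Ioc 0 ⌊X ^ (1 / k : ℝ)⌋₊).filter Nat.Prime ⊆ (range (⌊X⌋₊ + 1)).filter Nat.Prime := by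
  have hroot : X ^ (1 / k : ℝ) ≤ X :=
    rpow_le_self_of_one_le hX (div_le_one_of_le₀ (mod_cast hk) k.cast_nonneg)
  refine filter_subset_filter _ fun p hp ↦ ?_
  exact mem_range_succ_iff.mpr ((mem_Ioc.mp hp).2.trans (Nat.floor_mono hroot))

lemma smoothedLogZeta_le_sum_neg_log (hX : 1 ≤ X) :
    smoothedLogZeta X ≤
      ∑ p ∈ (range (⌊X⌋₊ + 1)).filter Nat.Prime, -Real.log (1 - (1 - p / X) / p) := by
  have hX₀ : 0 ≤ X := zero_le_one.trans hX
  set N := ⌊Real.log X / Real.log 2⌋₊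
  have hterm {k p : ℕ} (hk : k ∈ Icc 1 N) (hp : p ∈ (range (⌊X⌋₊ + 1)).filter Nat.Prime) :=
    logZetaCoeff_prime_pow_div_mul_le (mem_filter.mp hp).2
      (Nat.one_le_iff_ne_zero.mp (mem_Icc.mp hk).1) (le_of_mem_primes hX₀ hp)
  have hunit {p : ℕ} (hp : p ∈ (range (⌊X⌋₊ + 1)).filter Nat.Prime) :=
    one_sub_div_div_mem_Ico (mem_filter.mp hp).2 (le_of_mem_primes hX₀ hp)
  calc smoothedLogZeta X
      = ∑ k ∈ Icc 1 N, ∑ p ∈ Ioc 0 ⌊X ^ (1 / k : ℝ)⌋₊ with p.Prime,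
          logZetaCoeff (p ^ k) / (p ^ k : ℕ) * (1 - (p ^ k : ℕ) / X) := by
        rw [smoothedLogZeta_eq_sum_isPrimePow, Chebyshev.sum_PrimePow_eq_sum_sum _ hX₀]
    _ ≤ ∑ k ∈ Icc 1 N, ∑ p ∈ (range (⌊X⌋₊ + 1)).filter Nat.Prime,
          ((1 - p / X) / p) ^ k / k := by
        refine sum_le_sum fun k hk ↦ ?_
        have hsubset := primes_le_rpow_one_div_subset hX (mem_Icc.mp hk).1
        exact (sum_le_sum fun p hp ↦ hterm hk (hsubset hp)).trans
          (sum_le_sum_of_subset_of_nonneg hsubset fun p hp _ ↦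
            div_nonneg (pow_nonneg (hunit hp).1 k) k.cast_nonneg)
    _ = ∑ p ∈ (range (⌊X⌋₊ + 1)).filter Nat.Prime, ∑ k ∈ Icc 1 N,
          ((1 - p / X) / p) ^ k / k := sum_comm
    _ ≤ _ := sum_le_sum fun p hp ↦ sum_pow_div_le_neg_log (hunit hp) N

theorem exp_smoothedLogZeta_le_prod (hX : 1 ≤ X) :
    Real.exp (smoothedLogZeta X) ≤
      ∏ p ∈ (range (⌊X⌋₊ + 1)).filter Nat.Prime, (1 - (1 - (p : ℝ) / X) / p)⁻¹ := by
  refine (Real.exp_le_exp.mpr (smoothedLogZeta_le_sum_neg_log hX)).trans_eq ?_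
  rw [Real.exp_sum]
  refine prod_congr rfl fun p hp ↦ ?_
  have hlt := (one_sub_div_div_mem_Ico (mem_filter.mp hp).2
    (le_of_mem_primes (zero_le_one.trans hX) hp)).2
  rw [Real.exp_neg, Real.exp_log (sub_pos.mpr hlt)]

end EulerProduct

end ResonatorProduct

/-- A Mertens-type lower bound for the resonator product:
∏_{p ≤ X} (1 − (1 − p/X)/p)^{−1} ≥ e^γ (log X)(1 − 1/log X − A/(log X)²). -/
theorem resonator_product_lower_bound :
    ∃ A : ℝ, 0 < A ∧ ∃ X₀ : ℝ, ∀ X : ℝ, X₀ ≤ X →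
      ∏ p ∈ (Finset.range (Nat.floor X + 1)).filter Nat.Prime,
          (1 - (1 - (p : ℝ) / X) / p)⁻¹ ≥
        Real.exp Real.eulerMascheroniConstant * Real.log X *
          (1 - 1 / Real.log X - A / (Real.log X) ^ (2 : ℕ)) := by
  obtain ⟨C, hC, hsum⟩ := ResonatorProduct.exists_integral_sub_le_smoothedLogZeta
  refine ⟨3 + C, by positivity, Real.exp 1, fun X hX ↦ ?_⟩
  have hX₁ : 1 < X := (Real.one_lt_exp_iff.mpr one_pos).trans_le hX
  have hlog : 0 < Real.log X := Real.log_pos hX₁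
  have hint :=
    ResonatorProduct.log_add_eulerMascheroniConstant_sub_le_integral_logDensity_mul_hinge hlog
  set E := 1 / Real.log X + (3 + C) / Real.log X ^ 2 with hE
  calc Real.exp eulerMascheroniConstant * Real.log X *
        (1 - 1 / Real.log X - (3 + C) / Real.log X ^ 2)
      = Real.exp eulerMascheroniConstant * Real.log X * (1 - E) := by rw [sub_sub]
    _ ≤ Real.exp eulerMascheroniConstant * Real.log X * Real.exp (-E) := by
        gcongr
        exact Real.one_sub_le_exp_neg E
    _ = Real.exp (eulerMascheroniConstant + Real.log (Real.log X) - E) := by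
        rw [sub_eq_add_neg, Real.exp_add, Real.exp_add, Real.exp_log hlog]
    _ ≤ Real.exp (ResonatorProduct.smoothedLogZeta X) := by
        gcongr
        rw [hE, add_div]
        linarith [hsum X hX₁]
    _ ≤ _ := ResonatorProduct.exp_smoothedLogZeta_le_prod hX₁.le
end

section
/- As X → ∞, one has (log X / X) · Σ_{p ≤ X, p prime} ( − log( 1 − (1 − p/X)² ) ) → 2 − log 4. Equivalently, log ∏_{p ≤ X} (1 − (1 − p/X)²)^{−1} = (2 − log 4 + o(1)) · X / log X. -/
open Real Finset Filter

/-!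
Since `-log (1 - (1 - a)²) = ∫ u in a..1, (u⁻¹ - (2 - u)⁻¹)` for `0 < a ≤ 1`, the sum over primes
`p ≤ X` equals `∫ u in 0..1, π(uX) (u⁻¹ - (2 - u)⁻¹)`. By the prime number theorem
`π(uX) log X / X → u`, Chebyshev's bound provides the integrable majorant `C (1 - log u)`, and
`∫ u in 0..1, u (u⁻¹ - (2 - u)⁻¹) = 2 - log 4`.

The prime number theorem comes from a Tauberian theorem: if `f` is bounded, its decrease is at most
linear, and its Laplace transform extends continuously to the imaginary axis, then `f → 0`. Testing
`f` against translates of a nonnegative kernel with compactly supported Fourier transform turns the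
boundary values into averages of `f`, which tend to `0` by the Riemann–Lebesgue lemma.
-/

open MeasureTheory FourierTransform Topology

section LaplaceTransform

variable {E : Type*} [NormedAddCommGroup E] [NormedSpace ℂ E]

/-- The one-sided Laplace transform `∫₀^∞ e^{-zt} f(t) dt`; values of `f` on `(-∞, 0]` are ignored,
and the value is `0` where the integral diverges. -/
noncomputable def laplaceTransform (f : ℝ → E) (z : ℂ) : E :=
  ∫ t in Set.Ioi (0 : ℝ), Complex.exp (-z * t) • f t

/-- The Laplace transform of `f` on the open right half-plane is the restriction of a function
continuous on the closed half-plane. This is the boundary condition of the Tauberian theorem. -/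
def HasContinuousLaplaceExtension (f : ℝ → E) : Prop :=
  ∃ G : ℂ → E, ContinuousOn G {z | 0 ≤ z.re} ∧ Set.EqOn (laplaceTransform f) G {z | 0 < z.re}

theorem laplaceTransform_neg (f : ℝ → E) (z : ℂ) :
    laplaceTransform (fun t ↦ -f t) z = -laplaceTransform f z := by
  simp only [laplaceTransform, smul_neg, integral_neg]

theorem laplaceTransform_sub {f g : ℝ → E} {z : ℂ}
    (hf : IntegrableOn (fun t : ℝ ↦ Complex.exp (-z * t) • f t) (Set.Ioi 0))
    (hg : IntegrableOn (fun t : ℝ ↦ Complex.exp (-z * t) • g t) (Set.Ioi 0)) :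
    laplaceTransform (fun t ↦ f t - g t) z = laplaceTransform f z - laplaceTransform g z := by
  simp only [laplaceTransform, smul_sub]
  exact integral_sub hf hg

theorem laplaceTransform_comp_mul_left (f : ℝ → E) {c : ℝ} (hc : 0 < c) (z : ℂ) :
    laplaceTransform (fun t ↦ f (c * t)) z = c⁻¹ • laplaceTransform f (z / c) := by
  have hcC : (c : ℂ) ≠ 0 := mod_cast hc.ne'
  have h := integral_comp_mul_left_Ioi (fun t : ℝ ↦ Complex.exp (-(z / c) * t) • f t) 0 hc
  rw [mul_zero] at h
  rw [laplaceTransform, laplaceTransform, ← h]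
  congr with t
  congr 2
  push_cast
  field_simp

theorem HasContinuousLaplaceExtension.neg {f : ℝ → E} (hf : HasContinuousLaplaceExtension f) :
    HasContinuousLaplaceExtension fun t ↦ -f t := by
  obtain ⟨G, hG, hfG⟩ := hf
  exact ⟨-G, hG.neg, fun z hz ↦ by rw [laplaceTransform_neg, hfG hz, Pi.neg_apply]⟩

theorem HasContinuousLaplaceExtension.comp_mul_left {f : ℝ → E}
    (hf : HasContinuousLaplaceExtension f) {c : ℝ} (hc : 0 < c) :
    HasContinuousLaplaceExtension fun t ↦ f (c * t) := by
  obtain ⟨G, hG, hfG⟩ := hf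
  refine ⟨fun z ↦ c⁻¹ • G (z / c), (hG.comp (by fun_prop) fun z hz ↦ ?_).const_smul _,
    fun z hz ↦ ?_⟩
  · simpa only [Set.mem_ofPred_eq, Complex.div_ofReal_re] using div_nonneg hz hc.le
  · rw [laplaceTransform_comp_mul_left f hc, hfG]
    simpa only [Set.mem_ofPred_eq, Complex.div_ofReal_re] using div_pos hz hc

theorem integrableOn_cexp_neg_mul_smul {f : ℝ → E} {M : ℝ}
    (hf : AEStronglyMeasurable f (volume.restrict (Set.Ioi 0))) (hM : ∀ t > 0, ‖f t‖ ≤ M)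
    {z : ℂ} (hz : 0 < z.re) :
    IntegrableOn (fun t : ℝ ↦ Complex.exp (-z * t) • f t) (Set.Ioi 0) := by
  refine (integrableOn_exp_mul_complex_Ioi (a := -z) (by simpa using hz) 0).smul_bdd M hf ?_
  exact (ae_restrict_iff' measurableSet_Ioi).mpr (.of_forall hM)

theorem fourier_indicator_cexp_neg_mul_smul (f : ℝ → E) (z : ℂ) (ξ : ℝ) :
    𝓕 ((Set.Ioi 0).indicator fun t : ℝ ↦ Complex.exp (-z * t) • f t) ξ =
      laplaceTransform f (z + 2 * π * ξ * Complex.I) := by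
  rw [fourier_real_eq_integral_exp_smul, laplaceTransform, ← integral_indicator measurableSet_Ioi]
  congr 1 with t
  simp only [Set.indicator_apply, smul_ite, smul_zero, smul_smul, ← Complex.exp_add]
  congr 3
  push_cast
  ring

theorem laplaceTransform_fourier_smul [CompleteSpace E] {f : ℝ → E} {φ : ℝ → ℂ} {M : ℝ}
    (hf : AEStronglyMeasurable f (volume.restrict (Set.Ioi 0))) (hM : ∀ t > 0, ‖f t‖ ≤ M)
    (hφ : Integrable φ) {z : ℂ} (hz : 0 < z.re) :
    laplaceTransform (fun t ↦ 𝓕 φ t • f t) z =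
      ∫ ξ, φ ξ • laplaceTransform f (z + 2 * π * ξ * Complex.I) := by
  have hint := (integrable_indicator_iff measurableSet_Ioi).mpr
    (integrableOn_cexp_neg_mul_smul hf hM hz)
  have hflip : ∫ t, 𝓕 φ t • (Set.Ioi 0).indicator (fun t : ℝ ↦ Complex.exp (-z * t) • f t) t =
      ∫ ξ, φ ξ • 𝓕 ((Set.Ioi 0).indicator fun t : ℝ ↦ Complex.exp (-z * t) • f t) ξ := by
    simpa using! VectorFourier.integral_fourierIntegral_smul_eq_flip (L := innerₗ ℝ)
      Real.continuous_fourierChar continuous_inner hφ hint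
  simp_rw [fourier_indicator_cexp_neg_mul_smul] at hflip
  rw [← hflip, laplaceTransform, ← integral_indicator measurableSet_Ioi]
  congr 1 with t
  simp only [Set.indicator_apply, smul_ite, smul_zero, smul_comm (𝓕 φ t)]

theorem tendsto_laplaceTransform_nhdsGT_zero {f : ℝ → E} (hf : IntegrableOn f (Set.Ioi 0)) :
    Tendsto (fun ε : ℝ ↦ laplaceTransform f ε) (𝓝[>] 0) (𝓝 (∫ t in Set.Ioi (0 : ℝ), f t)) := by
  refine tendsto_integral_filter_of_dominated_convergence (fun t ↦ ‖f t‖) ?_ ?_ hf.norm ?_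
  · exact .of_forall fun ε ↦
      (by fun_prop : Continuous fun t : ℝ ↦ Complex.exp (-ε * t)).aestronglyMeasurable.smul hf.1
  · filter_upwards [self_mem_nhdsWithin] with ε hε
    refine (ae_restrict_iff' measurableSet_Ioi).mpr (.of_forall fun t ht ↦ ?_)
    have hexp : ‖Complex.exp (-ε * t)‖ ≤ 1 := by
      rw [Complex.norm_exp, ← Complex.ofReal_neg, ← Complex.ofReal_mul, Complex.ofReal_re,
        exp_le_one_iff, neg_mul, Left.neg_nonpos_iff]
      exact (mul_pos hε ht).le
    exact (norm_smul_le _ _).trans (mul_le_of_le_one_left (norm_nonneg _) hexp)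
  · refine .of_forall fun t ↦ ?_
    have hcont : Continuous fun ε : ℝ ↦ Complex.exp (-ε * t) • f t := by fun_prop
    simpa using (hcont.tendsto 0).mono_left nhdsWithin_le_nhds

theorem tendsto_integral_smul_vertical_line {φ : ℝ → ℂ} {G : ℂ → E} (hφ : Integrable φ)
    (hφc : HasCompactSupport φ) (hG : ContinuousOn G {z | 0 ≤ z.re}) :
    Tendsto (fun ε : ℝ ↦ ∫ ξ, φ ξ • G (ε + 2 * π * ξ * Complex.I)) (𝓝[>] 0)
      (𝓝 (∫ ξ, φ ξ • G (2 * π * ξ * Complex.I))) := by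
  have hcont : ContinuousOn (fun p : ℝ × ℝ ↦ G (p.1 + 2 * π * p.2 * Complex.I))
      (Set.Ici 0 ×ˢ Set.univ) :=
    hG.comp (by fun_prop) fun p hp ↦ by simpa using hp.1
  obtain ⟨C, hC⟩ := ((isCompact_Icc (a := (0 : ℝ)) (b := 1)).prod hφc).exists_bound_of_continuousOn
    (hcont.mono (Set.prod_mono Set.Icc_subset_Ici_self (Set.subset_univ _)))
  refine tendsto_integral_filter_of_dominated_convergence (fun ξ ↦ ‖φ ξ‖ * C) ?_ ?_
    (hφ.norm.mul_const C) ?_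
  · filter_upwards [self_mem_nhdsWithin] with ε hε
    refine hφ.1.smul (Continuous.aestronglyMeasurable ?_)
    exact hcont.comp_continuous (f := fun ξ : ℝ ↦ (ε, ξ)) (by fun_prop)
      fun ξ ↦ ⟨Set.mem_Ici_of_Ioi hε, Set.mem_univ ξ⟩
  · filter_upwards [Ioo_mem_nhdsGT (zero_lt_one' ℝ)] with ε hε
    refine .of_forall fun ξ ↦ ?_
    by_cases hξ : ξ ∈ tsupport φ
    · rw [norm_smul]
      gcongr
      exact hC (ε, ξ) ⟨⟨hε.1.le, hε.2.le⟩, hξ⟩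
    · simp [image_eq_zero_of_notMem_tsupport hξ]
  · refine .of_forall fun ξ ↦ ?_
    have hline : ContinuousOn (fun ε : ℝ ↦ G (ε + 2 * π * ξ * Complex.I)) (Set.Ici 0) :=
      hcont.comp (f := fun ε : ℝ ↦ (ε, ξ)) (by fun_prop) fun ε hε ↦ ⟨hε, Set.mem_univ ξ⟩
    have h := (hline 0 Set.self_mem_Ici).mono Set.Ioi_subset_Ici_self
    simpa using h.tendsto.const_smul (φ ξ)

theorem integral_fourier_smul_eq_integral_smul_boundary [CompleteSpace E]
    {f : ℝ → E} {φ : ℝ → ℂ} {G : ℂ → E} {M : ℝ}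
    (hf : AEStronglyMeasurable f (volume.restrict (Set.Ioi 0))) (hM : ∀ t > 0, ‖f t‖ ≤ M)
    (hG : ContinuousOn G {z | 0 ≤ z.re}) (hfG : Set.EqOn (laplaceTransform f) G {z | 0 < z.re})
    (hφ : Integrable φ) (hφc : HasCompactSupport φ) (hφi : Integrable (𝓕 φ)) :
    ∫ t in Set.Ioi (0 : ℝ), 𝓕 φ t • f t = ∫ ξ, φ ξ • G (2 * π * ξ * Complex.I) := by
  have hint : IntegrableOn (fun t ↦ 𝓕 φ t • f t) (Set.Ioi 0) :=
    hφi.integrableOn.smul_bdd M hf ((ae_restrict_iff' measurableSet_Ioi).mpr (.of_forall hM))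
  refine tendsto_nhds_unique ((tendsto_laplaceTransform_nhdsGT_zero hint).congr' ?_)
    (tendsto_integral_smul_vertical_line hφ hφc hG)
  filter_upwards [self_mem_nhdsWithin] with ε hε
  rw [laplaceTransform_fourier_smul hf hM hφ (by simpa using hε)]
  congr 1 with ξ
  rw [hfG]
  simpa using hε

theorem fourier_fourierChar_mul (φ : ℝ → ℂ) (y t : ℝ) :
    𝓕 (fun ξ ↦ (𝐞 (y * ξ) : ℂ) * φ ξ) t = 𝓕 φ (t - y) := by
  simp_rw [fourier_real_eq, Circle.smul_def, smul_eq_mul, ← mul_assoc]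
  congr 1 with ξ
  rw [← Circle.coe_mul, ← AddChar.map_add_eq_mul]
  ring_nf

theorem HasContinuousLaplaceExtension.tendsto_integral_fourier_smul [CompleteSpace E]
    {f : ℝ → E} {φ : ℝ → ℂ} {M : ℝ} (hfG : HasContinuousLaplaceExtension f)
    (hf : AEStronglyMeasurable f (volume.restrict (Set.Ioi 0))) (hM : ∀ t > 0, ‖f t‖ ≤ M)
    (hφ : Integrable φ) (hφc : HasCompactSupport φ) (hφi : Integrable (𝓕 φ)) :
    Tendsto (fun y : ℝ ↦ ∫ t in Set.Ioi (0 : ℝ), 𝓕 φ (t - y) • f t) atTop (𝓝 0) := by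
  obtain ⟨G, hG, hfG⟩ := hfG
  have hboundary (y : ℝ) : ∫ t in Set.Ioi (0 : ℝ), 𝓕 φ (t - y) • f t =
      𝓕 (fun ξ : ℝ ↦ φ ξ • G (2 * π * ξ * Complex.I)) (-y) := by
    have hmod : Integrable fun ξ ↦ (𝐞 (y * ξ) : ℂ) * φ ξ := by
      refine hφ.bdd_mul (c := 1) ?_ (.of_forall fun ξ ↦ (Circle.norm_coe _).le)
      exact (by fun_prop : Continuous fun ξ : ℝ ↦ (𝐞 (y * ξ) : ℂ)).aestronglyMeasurable
    have hmodi : Integrable (𝓕 fun ξ ↦ (𝐞 (y * ξ) : ℂ) * φ ξ) :=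
      (hφi.comp_sub_right y).congr (.of_forall fun t ↦ (fourier_fourierChar_mul φ y t).symm)
    simp_rw [← fourier_fourierChar_mul]
    rw [integral_fourier_smul_eq_integral_smul_boundary hf hM hG hfG hmod hφc.mul_left hmodi,
      fourier_real_eq]
    congr 1 with ξ
    rw [Circle.smul_def, mul_smul, mul_neg, neg_neg, mul_comm]
  simp_rw [hboundary]
  exact (Real.zero_at_infty_fourier _).comp
    (tendsto_neg_atTop_atBot.mono_right atBot_le_cocompact)

end LaplaceTransform

section Kernel

theorem fourier_im_eq_zero_of_even {g : ℝ → ℝ} (hg : Function.Even g) (ξ : ℝ) :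
    (𝓕 (fun t ↦ (g t : ℂ)) ξ).im = 0 := by
  rw [← Complex.conj_eq_iff_im, fourier_real_eq, ← integral_conj, ← integral_neg_eq_self]
  congr 1 with t
  simp [Circle.smul_def, hg t, ← Circle.coe_inv_eq_conj, ← AddChar.map_neg_eq_inv]

/-- The kernel is `(𝓕 g)²` for an even bump function `g`, the Fourier transform of `g ⋆ g`. -/
theorem exists_hasCompactSupport_fourier_eq_nonneg :
    ∃ (φ : ℝ → ℂ) (k : ℝ → ℝ), Integrable φ ∧ HasCompactSupport φ ∧ (∀ ξ, 𝓕 φ ξ = k ξ) ∧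
      0 ≤ k ∧ Integrable k ∧ 0 < ∫ ξ, k ξ := by
  let b : ContDiffBump (0 : ℝ) := ⟨1, 2, one_pos, one_lt_two⟩
  set g : ℝ → ℂ := fun t ↦ (b.normed volume t : ℂ)
  have hg : Integrable g := b.integrable_normed.ofReal
  have hgc : HasCompactSupport g := b.hasCompactSupport_normed.comp_left Complex.ofReal_zero
  let s : SchwartzMap ℝ ℂ :=
    hgc.toSchwartzMap (Complex.ofRealCLM.contDiff.comp (b.contDiff_normed (n := ⊤)))
  have hs : 𝓕 g = (𝓕 s : SchwartzMap ℝ ℂ) := (SchwartzMap.fourier_coe s).symm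
  have hreal (ξ : ℝ) : (𝓕 g ξ).im = 0 := fourier_im_eq_zero_of_even b.normed_neg ξ
  have hsq (ξ : ℝ) : 𝓕 g ξ * 𝓕 g ξ = (‖𝓕 g ξ‖ ^ 2 : ℝ) := by
    rw [← Complex.normSq_eq_norm_sq, Complex.normSq_eq_conj_mul_self,
      Complex.conj_eq_iff_im.mpr (hreal ξ)]
  have hmass : 𝓕 g 0 = 1 := by
    simp [fourier_real_eq, g, integral_complex_ofReal, b.integral_normed]
  have hk : Integrable fun ξ ↦ ‖𝓕 g ξ‖ ^ 2 :=
    hs ▸ ((𝓕 s).memLp 2).integrable_norm_pow two_ne_zero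
  refine ⟨convolution g g (ContinuousLinearMap.mul ℂ ℂ) volume, fun ξ ↦ ‖𝓕 g ξ‖ ^ 2,
    hg.integrable_convolution _ hg, hgc.convolution _ hgc, fun ξ ↦ ?_, fun ξ ↦ sq_nonneg _, hk, ?_⟩
  · rw [Real.fourier_mul_convolution_eq hg hg, hsq]
  · refine integral_pos_of_integrable_nonneg_nonzero (x := 0) ?_ hk (fun ξ ↦ sq_nonneg _) ?_
    · exact hs ▸ (𝓕 s).continuous.norm.pow 2
    · simp [hmass]

end Kernel

section Window

theorem tendsto_setIntegral_lt_abs_atTop {k : ℝ → ℝ} (hk : Integrable k) :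
    Tendsto (fun a : ℝ ↦ ∫ v in {v | a < |v|}, k v) atTop (𝓝 0) := by
  have hempty : ⋂ a : ℝ, {v : ℝ | a < |v|} = ∅ :=
    Set.eq_empty_of_forall_notMem fun v hv ↦ lt_irrefl |v| (Set.mem_iInter.mp hv |v|)
  have h := tendsto_setIntegral_of_antitone (s := fun a : ℝ ↦ {v : ℝ | a < |v|})
    (fun a ↦ measurableSet_lt measurable_const measurable_abs)
    (fun a b hab v hv ↦ hab.trans_lt hv) ⟨0, hk.integrableOn⟩
  simpa only [hempty, setIntegral_empty] using h

theorem le_integral_mul_of_forall_abs_sub_le {k F : ℝ → ℝ} {M η a y : ℝ} (hk0 : 0 ≤ k)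
    (hk : Integrable k) (hF : AEStronglyMeasurable F) (hM : ∀ t, |F t| ≤ M)
    (hη : ∀ t, |t - y| ≤ a → η ≤ F t) :
    η * (∫ v, k v) - (η + M) * ∫ v in {v | a < |v|}, k v ≤ ∫ t, k (t - y) * F t := by
  have htail : MeasurableSet {v : ℝ | a < |v|} := measurableSet_lt measurable_const measurable_abs
  rw [← integral_indicator htail, ← integral_const_mul, ← integral_const_mul,
    ← integral_sub (hk.const_mul η) ((hk.indicator htail).const_mul _),
    ← integral_sub_right_eq_self _ y]
  refine integral_mono (((hk.const_mul η).sub ((hk.indicator htail).const_mul _)).comp_sub_right y)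
    ((hk.comp_sub_right y).mul_bdd hF (.of_forall hM)) fun t ↦ ?_
  by_cases ht : a < |t - y|
  · have := mul_le_mul_of_nonneg_left (neg_le_of_abs_le (hM t)) (hk0 (t - y))
    simp only [Set.indicator_of_mem (show t - y ∈ {v | a < |v|} from ht)]
    linarith
  · have := mul_le_mul_of_nonneg_left (hη t (not_lt.mp ht)) (hk0 (t - y))
    simp only [Set.indicator_of_notMem (show t - y ∉ {v | a < |v|} from ht)]
    linarith

theorem exists_forall_eventually_exists_lt_of_tendsto_integral_mul {k : ℝ → ℝ} {η : ℝ}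
    (hk0 : 0 ≤ k) (hk : Integrable k) (hkpos : 0 < ∫ v, k v) (M : ℝ) (hη : 0 < η) :
    ∃ a, ∀ F : ℝ → ℝ, AEStronglyMeasurable F → (∀ t, |F t| ≤ M) →
      Tendsto (fun y ↦ ∫ t, k (t - y) * F t) atTop (𝓝 0) →
        ∀ᶠ y in atTop, ∃ t, |t - y| ≤ a ∧ F t < η := by
  have hlim : Tendsto (fun a : ℝ ↦ η * (∫ v, k v) - (η + M) * ∫ v in {v | a < |v|}, k v) atTop
      (𝓝 (η * ∫ v, k v)) := by
    simpa using ((tendsto_setIntegral_lt_abs_atTop hk).const_mul (η + M)).const_sub _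
  obtain ⟨a, ha⟩ := (hlim.eventually_const_lt (mul_pos hη hkpos)).exists
  refine ⟨a, fun F hF hM hconv ↦ ?_⟩
  filter_upwards [hconv.eventually_lt_const ha] with y hy
  by_contra! hlarge
  exact (le_integral_mul_of_forall_abs_sub_le hk0 hk hF hM hlarge).not_gt hy

/-- The window radius `a` is uniform in `f`, which the dilation argument of
`tendsto_zero_of_hasContinuousLaplaceExtension` relies on. -/
theorem exists_forall_eventually_exists_lt (M : ℝ) {η : ℝ} (hη : 0 < η) :
    ∃ a, ∀ f : ℝ → ℝ, AEStronglyMeasurable f (volume.restrict (Set.Ioi 0)) →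
      (∀ t > 0, |f t| ≤ M) → HasContinuousLaplaceExtension (fun t ↦ (f t : ℂ)) →
        ∀ᶠ y in atTop, ∃ t, |t - y| ≤ a ∧ f t < η := by
  obtain ⟨φ, k, hφ, hφc, hφk, hk0, hk, hkpos⟩ := exists_hasCompactSupport_fourier_eq_nonneg
  obtain ⟨a, ha⟩ :=
    exists_forall_eventually_exists_lt_of_tendsto_integral_mul hk0 hk hkpos M hη
  refine ⟨a, fun f hf hM hfG ↦ ?_⟩
  have hφi : Integrable (𝓕 φ) := hk.ofReal.congr (.of_forall fun ξ ↦ (hφk ξ).symm)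
  have hM0 : 0 ≤ M := (abs_nonneg _).trans (hM 1 one_pos)
  have hconv := hfG.tendsto_integral_fourier_smul (M := M)
    (Complex.continuous_ofReal.comp_aestronglyMeasurable hf) (by simpa using hM) hφ hφc hφi
  have hwindow := ha ((Set.Ioi 0).indicator f)
    ((aestronglyMeasurable_indicator_iff measurableSet_Ioi).mpr hf) (fun t ↦ ?_) ?_
  · filter_upwards [hwindow, eventually_gt_atTop a] with y ⟨t, hta, htη⟩ hy
    have ht : t ∈ Set.Ioi 0 := by
      have := neg_le_of_abs_le hta
      exact Set.mem_Ioi.mpr (by linarith)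
    exact ⟨t, hta, by rwa [Set.indicator_of_mem ht] at htη⟩
  · by_cases ht : t ∈ Set.Ioi 0
    · simpa only [Set.indicator_of_mem ht] using hM t ht
    · simpa only [Set.indicator_of_notMem ht, abs_zero] using hM0
  · refine ((Complex.continuous_re.tendsto 0).comp hconv).congr fun y ↦ ?_
    simp_rw [Function.comp_apply, hφk, smul_eq_mul, ← Complex.ofReal_mul]
    rw [integral_complex_ofReal, Complex.ofReal_re, ← integral_indicator measurableSet_Ioi]
    congr 1 with t
    rw [Set.indicator_mul_right]

end Window

section Tauberian

theorem aestronglyMeasurable_of_monotoneOn_add_mul {f : ℝ → ℝ} {K : ℝ} {s : Set ℝ}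
    (hs : MeasurableSet s) (hmono : MonotoneOn (fun t ↦ f t + K * t) s) :
    AEStronglyMeasurable f (volume.restrict s) := by
  have h : AEMeasurable (fun t ↦ f t + K * t) (volume.restrict s) :=
    aemeasurable_restrict_of_monotoneOn hs hmono
  simpa only [Pi.sub_def, add_sub_cancel_right] using
    (h.sub (by fun_prop : Measurable fun t ↦ K * t).aemeasurable).aestronglyMeasurable

/-- Dilating `f` preserves the bound `M` but shrinks the slope `K`, so that over a window of fixed
length the dilated function can decrease only slightly. -/
theorem tendsto_zero_of_hasContinuousLaplaceExtension {f : ℝ → ℝ} {K M : ℝ} (hK : 0 ≤ K)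
    (hM : ∀ t > 0, |f t| ≤ M) (hmono : MonotoneOn (fun t ↦ f t + K * t) (Set.Ioi 0))
    (hf : HasContinuousLaplaceExtension fun t ↦ (f t : ℂ)) : Tendsto f atTop (𝓝 0) := by
  refine Metric.tendsto_nhds.mpr fun ε hε ↦ ?_
  obtain ⟨a, ha⟩ := exists_forall_eventually_exists_lt M (half_pos hε)
  obtain ⟨c, hc, hac⟩ := exists_pos_mul_lt (half_pos hε) (2 * K * a)
  have hmeas : AEStronglyMeasurable (fun t ↦ f (c * t)) (volume.restrict (Set.Ioi 0)) :=
    aestronglyMeasurable_of_monotoneOn_add_mul (K := K * c) measurableSet_Ioi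
      fun s hs t ht hst ↦ by
        simpa only [mul_assoc] using hmono (mul_pos hc hs) (mul_pos hc ht) (by gcongr)
  have hbound : ∀ t > 0, |f (c * t)| ≤ M := fun t ht ↦ hM _ (mul_pos hc ht)
  have hupper := ha _ hmeas hbound (hf.comp_mul_left hc)
  have hlower := ha _ hmeas.neg (by simpa only [Pi.neg_apply, abs_neg] using hbound)
    (by simpa only [Pi.neg_apply, Complex.ofReal_neg] using (hf.comp_mul_left hc).neg)
  have hdiv : Tendsto (· / c) atTop atTop := tendsto_id.atTop_div_const hc
  filter_upwards [(tendsto_atTop_add_const_right _ a hdiv).eventually hupper,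
    (tendsto_atTop_add_const_right _ (-a) hdiv).eventually hlower, eventually_gt_atTop 0,
    eventually_gt_atTop (2 * a * c)] with x ⟨t, ht, hft⟩ ⟨s, hs, hfs⟩ hx hxa
  obtain ⟨ht1, ht2⟩ : x ≤ c * t ∧ c * t ≤ x + 2 * a * c := by
    rw [abs_le] at ht
    constructor <;> field_simp at ht <;> linarith
  obtain ⟨hs1, hs2⟩ : x - 2 * a * c ≤ c * s ∧ c * s ≤ x := by
    rw [abs_le] at hs
    constructor <;> field_simp at hs <;> linarith
  have hxt := hmono hx (hx.trans_le ht1) ht1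
  have hsx := hmono ((sub_pos.mpr hxa).trans_le hs1) hx hs2
  have hKt := mul_le_mul_of_nonneg_left ht2 hK
  have hKs := mul_le_mul_of_nonneg_left hs1 hK
  simp only [Pi.neg_apply] at hfs hxt hsx
  rw [dist_zero_right, norm_eq_abs, abs_lt]
  constructor <;> linarith

end Tauberian

section WienerIkehara

theorem laplaceTransform_const (c : ℂ) {z : ℂ} (hz : 0 < z.re) :
    laplaceTransform (fun _ ↦ c) z = c / z := by
  simp only [laplaceTransform, smul_eq_mul]
  rw [integral_mul_const, integral_exp_mul_complex_Ioi (by simpa using hz)]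
  simp [div_eq_inv_mul]

theorem laplaceTransform_exp_neg_mul (S : ℝ → ℝ) (z : ℂ) :
    laplaceTransform (fun t ↦ ((exp (-t) * S t : ℝ) : ℂ)) z =
      laplaceTransform (fun t ↦ (S t : ℂ)) (z + 1) := by
  simp only [laplaceTransform, smul_eq_mul, Complex.ofReal_mul, Complex.ofReal_exp, ← mul_assoc,
    ← Complex.exp_add]
  congr 1 with t
  push_cast
  ring_nf

theorem monotoneOn_exp_neg_mul_add {S : ℝ → ℝ} {M : ℝ} {s : Set ℝ} (hmono : MonotoneOn S s)
    (hM : ∀ t ∈ s, exp (-t) * S t ≤ M) (hS : ∀ t ∈ s, 0 ≤ S t) :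
    MonotoneOn (fun t ↦ exp (-t) * S t + M * t) s := by
  intro u hu t ht hut
  have hexp : 1 - (t - u) ≤ exp (u - t) := by linarith [add_one_le_exp (u - t)]
  have hM0 : 0 ≤ exp (-u) * S u := mul_nonneg (exp_pos _).le (hS u hu)
  calc exp (-u) * S u + M * u
      ≤ (1 - (t - u)) * (exp (-u) * S u) + M * t := by
        linarith [mul_le_mul_of_nonneg_left (hM u hu) (sub_nonneg.mpr hut)]
    _ ≤ exp (u - t) * (exp (-u) * S u) + M * t := by gcongr
    _ = exp (-t) * S u + M * t := by rw [← mul_assoc, ← exp_add]; ring_nf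
    _ ≤ exp (-t) * S t + M * t := by gcongr; exact hmono hu ht hut

theorem tendsto_exp_neg_mul_of_laplaceTransform_eq {S : ℝ → ℝ} {M c : ℝ} {A : ℂ → ℂ}
    (hmono : MonotoneOn S (Set.Ioi 0)) (hS : ∀ t > 0, 0 ≤ S t) (hM : ∀ t > 0, S t ≤ M * exp t)
    (hA : ContinuousOn A {s | 1 ≤ s.re})
    (hL : ∀ s, 1 < s.re → laplaceTransform (fun t ↦ (S t : ℂ)) s = A s + c / (s - 1)) :
    Tendsto (fun t ↦ exp (-t) * S t) atTop (𝓝 c) := by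
  have hbound (t : ℝ) (ht : 0 < t) : exp (-t) * S t ≤ M := by
    rw [exp_neg, inv_mul_le_iff₀ (exp_pos t), mul_comm]
    exact hM t ht
  have hnonneg (t : ℝ) (ht : 0 < t) : 0 ≤ exp (-t) * S t := mul_nonneg (exp_pos _).le (hS t ht)
  have hM0 : 0 ≤ M := (hnonneg 1 one_pos).trans (hbound 1 one_pos)
  have hadd := monotoneOn_exp_neg_mul_add hmono hbound hS
  have hmeas := aestronglyMeasurable_of_monotoneOn_add_mul measurableSet_Ioi hadd
  rw [← tendsto_sub_nhds_zero_iff]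
  refine tendsto_zero_of_hasContinuousLaplaceExtension (M := M + |c|) hM0 (fun t ht ↦ ?_) ?_
    ⟨fun z ↦ A (z + 1), hA.comp (by fun_prop) fun z hz ↦ by simpa using hz, fun z hz ↦ ?_⟩
  · grw [abs_sub, abs_of_nonneg (hnonneg t ht), hbound t ht]
  · exact (hadd.add_const (-c)).congr fun t _ ↦ by ring
  · have hint := integrableOn_cexp_neg_mul_smul (M := M)
      (Complex.continuous_ofReal.comp_aestronglyMeasurable hmeas) (fun t ht ↦ ?_) hz
    · have hconst := integrableOn_cexp_neg_mul_smul (f := fun _ ↦ (c : ℂ))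
        aestronglyMeasurable_const (fun _ _ ↦ le_rfl) hz
      simp_rw [Complex.ofReal_sub]
      rw [laplaceTransform_sub hint hconst, laplaceTransform_exp_neg_mul,
        laplaceTransform_const _ hz, hL _ (by simpa using hz), add_sub_cancel_right,
        add_sub_cancel_right]
    · simpa only [Function.comp_apply, Complex.norm_real, norm_of_nonneg (hnonneg t ht)]
        using hbound t ht

end WienerIkehara

section PrimeNumberTheorem

open ArithmeticFunction in
theorem exists_continuousOn_LSeries_vonMangoldt_sub :
    ∃ A : ℂ → ℂ, ContinuousOn A {s | 1 ≤ s.re} ∧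
      ∀ s : ℂ, 1 < s.re → LSeries (fun n ↦ (vonMangoldt n : ℂ)) s = A s + 1 / (s - 1) := by
  refine ⟨_, vonMangoldt.continuousOn_LFunctionResidueClassAux (1 : ZMod 1), fun s hs ↦ ?_⟩
  have h := vonMangoldt.eqOn_LFunctionResidueClassAux (isUnit_one : IsUnit (1 : ZMod 1)) hs
  have hΛ : vonMangoldt.residueClass (1 : ZMod 1) = fun n ↦ vonMangoldt n := by
    ext n
    simp [Subsingleton.elim _ (1 : ZMod 1)]
  rw [h, hΛ]
  simp

open ArithmeticFunction in
theorem LSeries_vonMangoldt_eq_mul_laplaceTransform {s : ℂ} (hs : 1 < s.re) :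
    LSeries (fun n ↦ (vonMangoldt n : ℂ)) s =
      s * laplaceTransform (fun t ↦ (Chebyshev.psi (exp t) : ℂ)) s := by
  have hO : (fun n : ℕ ↦ ∑ k ∈ Icc 1 n, vonMangoldt k) =O[atTop] fun n ↦ (n : ℝ) ^ (1 : ℝ) := by
    refine Asymptotics.IsBigO.of_bound (Real.log 4 + 4) (.of_forall fun n ↦ ?_)
    have h := Chebyshev.psi_le_const_mul_self (Nat.cast_nonneg n)
    have h0 := Chebyshev.psi_nonneg n
    simp only [Chebyshev.psi, Nat.floor_natCast, ← Icc_add_one_left_eq_Ioc, zero_add] at h h0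
    simpa [abs_of_nonneg h0] using h
  rw [LSeries_eq_mul_integral_of_nonneg _ zero_le_one hs hO fun _ ↦ vonMangoldt_nonneg,
    ← exp_zero, ← integral_comp_exp_Ioi, laplaceTransform]
  congr 2 with t
  have hcpow : ((exp t : ℝ) : ℂ) ^ (-(s + 1)) = Complex.exp (-(s + 1) * t) := by
    rw [Complex.cpow_def_of_ne_zero (by simp), ← Complex.ofReal_log (exp_pos t).le, log_exp,
      mul_comm]
  simp only [hcpow, Chebyshev.psi, ← Icc_add_one_left_eq_Ioc, zero_add, Complex.real_smul,
    smul_eq_mul, Complex.ofReal_sum]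
  rw [Complex.ofReal_exp, mul_left_comm, ← Complex.exp_add, mul_comm]
  ring_nf

theorem tendsto_psi_div_self : Tendsto (fun x ↦ Chebyshev.psi x / x) atTop (𝓝 1) := by
  obtain ⟨A, hA, hLA⟩ := exists_continuousOn_LSeries_vonMangoldt_sub
  have hs0 {s : ℂ} (hs : 1 ≤ s.re) : s ≠ 0 := Complex.ne_zero_of_re_pos (one_pos.trans_le hs)
  have hlim : Tendsto (fun t ↦ exp (-t) * Chebyshev.psi (exp t)) atTop (𝓝 1) := by
    refine tendsto_exp_neg_mul_of_laplaceTransform_eq (A := fun s ↦ (A s - 1) / s)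
      (M := log 4 + 4) ((Chebyshev.psi_mono.comp exp_monotone).monotoneOn _)
      (fun t _ ↦ Chebyshev.psi_nonneg _)
      (fun t _ ↦ Chebyshev.psi_le_const_mul_self (exp_pos t).le)
      ((hA.sub continuousOn_const).div continuousOn_id fun s hs ↦ hs0 hs) fun s hs ↦ ?_
    have h0 := hs0 hs.le
    have h1 : s - 1 ≠ 0 := fun h ↦ by simp [sub_eq_zero.mp h] at hs
    have hL := hLA s hs
    rw [LSeries_vonMangoldt_eq_mul_laplaceTransform hs] at hL
    rw [eq_div_of_mul_eq h0 ((mul_comm _ _).trans hL), Complex.ofReal_one]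
    field_simp
    ring
  refine (hlim.comp tendsto_log_atTop).congr' ?_
  filter_upwards [eventually_gt_atTop 0] with x hx
  rw [Function.comp_apply, exp_neg, exp_log hx, inv_mul_eq_div]

theorem tendsto_theta_div_self : Tendsto (fun x ↦ Chebyshev.theta x / x) atTop (𝓝 1) := by
  have hdiff : (Chebyshev.psi - Chebyshev.theta) =o[atTop] fun x : ℝ ↦ x := by
    refine Chebyshev.isBigO_psi_sub_theta_sqrt.trans_isLittleO ?_
    refine Asymptotics.isLittleO_of_tendsto (by simp +contextual) ?_
    simpa only [sqrt_div_self, one_div] using! tendsto_sqrt_atTop.inv_tendsto_atTop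
  have h := tendsto_psi_div_self.sub hdiff.tendsto_div_nhds_zero
  rw [sub_zero] at h
  refine h.congr fun x ↦ ?_
  rw [← sub_div, Pi.sub_apply, sub_sub_cancel]

theorem tendsto_primeCounting_mul_log_div :
    Tendsto (fun x : ℝ ↦ (Nat.primeCounting ⌊x⌋₊ : ℝ) * log x / x) atTop (𝓝 1) := by
  have hdiff : (fun x : ℝ ↦ (Nat.primeCounting ⌊x⌋₊ : ℝ) - Chebyshev.theta x / log x) =o[atTop]
      fun x ↦ x / log x := by
    refine Chebyshev.primeCounting_sub_theta_div_log_isBigO.trans_isLittleO ?_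
    refine Asymptotics.isLittleO_of_tendsto' ?_ ?_
    · filter_upwards [eventually_gt_atTop 1] with x hx hx0
      exact absurd hx0 (div_pos (one_pos.trans hx) (log_pos hx)).ne'
    · refine tendsto_log_atTop.inv_tendsto_atTop.congr' ?_
      filter_upwards [eventually_gt_atTop 1] with x hx
      have := log_pos hx
      simp only [Pi.inv_apply]
      field_simp
  have h := hdiff.tendsto_div_nhds_zero.add tendsto_theta_div_self
  rw [zero_add] at h
  refine h.congr' ?_
  filter_upwards [eventually_gt_atTop 1] with x hx
  have := log_pos hx
  field_simp
  ring

theorem tendsto_primeCounting_mul_mul_log_div {u : ℝ} (hu : 0 < u) :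
    Tendsto (fun X : ℝ ↦ (Nat.primeCounting ⌊u * X⌋₊ : ℝ) * log X / X) atTop (𝓝 u) := by
  have hscale : Tendsto (u * ·) atTop atTop := tendsto_id.const_mul_atTop hu
  have hlog := ((tendsto_log_atTop.comp hscale).const_div_atTop (log u)).const_sub 1
  have h := ((tendsto_primeCounting_mul_log_div.comp hscale).mul hlog).mul_const u
  rw [sub_zero, one_mul, one_mul] at h
  refine h.congr' ?_
  filter_upwards [eventually_gt_atTop 0, hscale.eventually_gt_atTop 1] with X hX huX
  have := log_pos huX
  simp only [Function.comp_apply]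
  rw [eq_sub_of_add_eq' (log_mul hu.ne' hX.ne').symm]
  field_simp

end PrimeNumberTheorem

section SumOverPrimes

theorem sum_intervalIntegral_eq_integral_card_smul {ι E : Type*} [NormedAddCommGroup E]
    [NormedSpace ℝ E] (s : Finset ι) {a : ι → ℝ} {b c : ℝ} {g : ℝ → E} (hbc : b ≤ c)
    (hb : ∀ i ∈ s, b < a i) (hc : ∀ i ∈ s, a i ≤ c)
    (hg : ∀ i ∈ s, IntegrableOn g (Set.Icc (a i) c)) :
    ∑ i ∈ s, ∫ u in a i..c, g u = ∫ u in b..c, #{i ∈ s | a i ≤ u} • g u := by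
  have hinter (i : ι) (hi : i ∈ s) : Set.Ioc b c ∩ Set.Ici (a i) = Set.Icc (a i) c :=
    Set.ext fun u ↦ ⟨fun hu ↦ ⟨hu.2, hu.1.2⟩, fun hu ↦ ⟨⟨(hb i hi).trans_le hu.1, hu.2⟩, hu.1⟩⟩
  have hterm (i : ι) (hi : i ∈ s) :
      ∫ u in a i..c, g u = ∫ u in Set.Ioc b c, (Set.Ici (a i)).indicator g u := by
    rw [intervalIntegral.integral_of_le (hc i hi), setIntegral_indicator measurableSet_Ici,
      hinter i hi, integral_Icc_eq_integral_Ioc]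
  have hint (i : ι) (hi : i ∈ s) : IntegrableOn ((Set.Ici (a i)).indicator g) (Set.Ioc b c) := by
    rw [integrableOn_indicator_iff measurableSet_Ici, Set.inter_comm, hinter i hi]
    exact hg i hi
  rw [sum_congr rfl hterm, ← integral_finsetSum _ hint, intervalIntegral.integral_of_le hbc]
  congr 1 with u
  simp only [Set.indicator_apply, Set.mem_Ici, ← sum_filter, sum_const]

theorem card_primesLE_filter_div_le {u X : ℝ} (hX : 0 < X) (hu0 : 0 ≤ u) (hu1 : u ≤ 1) :
    #{p ∈ Nat.primesLE ⌊X⌋₊ | ((p : ℕ) / X : ℝ) ≤ u} = Nat.primeCounting ⌊u * X⌋₊ := by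
  rw [← Nat.primesLE_card_eq_primeCounting]
  congr 1 with p
  rw [mem_filter, Nat.mem_primesLE, Nat.le_floor_iff hX.le, Nat.mem_primesLE,
    Nat.le_floor_iff (by positivity), div_le_iff₀ hX]
  exact ⟨fun h ↦ ⟨h.2, h.1.2⟩, fun h ↦ ⟨⟨h.1.trans (mul_le_of_le_one_left hX.le hu1), h.2⟩, h.1⟩⟩

theorem primeCounting_floor_le {y : ℝ} (hy : 0 ≤ y) : (Nat.primeCounting ⌊y⌋₊ : ℝ) ≤ y := by
  refine le_trans ?_ (Nat.floor_le hy)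
  have hsub : Nat.primesLE ⌊y⌋₊ ⊆ Ioc 0 ⌊y⌋₊ := fun p hp ↦ by
    rw [Nat.mem_primesLE] at hp
    exact mem_Ioc.mpr ⟨hp.2.pos, hp.1⟩
  rw [← Nat.primesLE_card_eq_primeCounting]
  exact_mod_cast (card_le_card hsub).trans_eq (by simp)

theorem primeCounting_mul_log_le {y : ℝ} (hy : 1 ≤ y) :
    (Nat.primeCounting ⌊y⌋₊ : ℝ) * log y ≤ (2 * log 4 + 2) * y := by
  rcases hy.eq_or_lt with rfl | hy
  · simpa using by positivity
  have hlog := log_pos hy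
  have hlog_sqrt : log √y = log y / 2 := log_sqrt (by linarith)
  have hlog_le : log y / 2 ≤ √y := hlog_sqrt ▸ log_le_self (sqrt_nonneg y)
  have hchebyshev := Chebyshev.pi_le_log4_mul_div hy
  rw [hlog_sqrt] at hchebyshev
  calc (Nat.primeCounting ⌊y⌋₊ : ℝ) * log y
      ≤ (log 4 * y / (log y / 2) + √y) * log y := by gcongr
    _ = 2 * log 4 * y + 2 * √y * (log y / 2) := by field_simp
    _ ≤ 2 * log 4 * y + 2 * √y * √y := by gcongr
    _ = (2 * log 4 + 2) * y := by rw [mul_assoc 2 √y, mul_self_sqrt (by linarith)]; ring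

theorem primeCounting_mul_mul_log_le {u X : ℝ} (hu0 : 0 < u) (hu1 : u ≤ 1) (hX : 1 ≤ X) :
    (Nat.primeCounting ⌊u * X⌋₊ : ℝ) * log X ≤ (2 * log 4 + 2) * ((1 - log u) * (u * X)) := by
  have hX0 : 0 < X := one_pos.trans_le hX
  have hlogu : 0 ≤ -log u := neg_nonneg.mpr (log_nonpos hu0.le hu1)
  have hlog4 : 0 < log 4 := log_pos (by norm_num)
  rcases lt_or_ge (u * X) 1 with hy | hy
  · rw [Nat.floor_eq_zero.mpr hy, Nat.primeCounting_zero, Nat.cast_zero, zero_mul]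
    have : 0 ≤ 1 - log u := by linarith
    positivity
  calc (Nat.primeCounting ⌊u * X⌋₊ : ℝ) * log X
      = Nat.primeCounting ⌊u * X⌋₊ * log (u * X) + Nat.primeCounting ⌊u * X⌋₊ * -log u := by
        rw [log_mul hu0.ne' hX0.ne']
        ring
    _ ≤ (2 * log 4 + 2) * (u * X) + u * X * -log u :=
        add_le_add (primeCounting_mul_log_le hy)
          (mul_le_mul_of_nonneg_right (primeCounting_floor_le (by positivity)) hlogu)
    _ ≤ (2 * log 4 + 2) * (u * X) + (2 * log 4 + 2) * (u * X) * -log u := by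
        gcongr _ + ?_ * _
        exact le_mul_of_one_le_left (by positivity) (by linarith)
    _ = (2 * log 4 + 2) * ((1 - log u) * (u * X)) := by ring

theorem inv_one_sub_log_mul_cancel {u : ℝ} (hu0 : 0 < u) (hu1 : u ≤ 1) (x : ℝ) :
    ((1 - log u) * u)⁻¹ * ((1 - log u) * (u * x)) = x := by
  have hlog : 0 < 1 - log u := by linarith [log_nonpos hu0.le hu1]
  rw [← mul_assoc _ u, inv_mul_cancel_left₀ (by positivity)]

theorem integrableOn_Icc_of_integrableOn_one_sub_log_mul {g : ℝ → ℝ}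
    (hg : IntegrableOn (fun u ↦ (1 - log u) * (u * g u)) (Set.Ioc 0 1)) {a : ℝ} (ha : 0 < a) :
    IntegrableOn g (Set.Icc a 1) := by
  have hsub : Set.Icc a 1 ⊆ Set.Ioc 0 1 := fun u hu ↦ ⟨ha.trans_le hu.1, hu.2⟩
  have hcont : ContinuousOn (fun u ↦ ((1 - log u) * u)⁻¹) (Set.Icc a 1) := by
    refine ContinuousOn.inv₀ ?_ fun u hu ↦ ?_
    · fun_prop (disch := exact fun u hu ↦ (hsub hu).1.ne')
    · have := log_nonpos (hsub hu).1.le hu.2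
      exact mul_ne_zero (by linarith) (hsub hu).1.ne'
  exact ((hg.mono_set hsub).continuousOn_mul hcont isCompact_Icc).congr_fun
    (fun u hu ↦ inv_one_sub_log_mul_cancel (hsub hu).1 hu.2 (g u)) measurableSet_Icc

theorem aestronglyMeasurable_of_integrableOn_one_sub_log_mul {g : ℝ → ℝ}
    (hg : IntegrableOn (fun u ↦ (1 - log u) * (u * g u)) (Set.Ioc 0 1)) :
    AEStronglyMeasurable g (volume.restrict (Set.Ioc 0 1)) := by
  have hweight : Measurable fun u ↦ ((1 - log u) * u)⁻¹ := by fun_prop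
  refine (hweight.aestronglyMeasurable.mul hg.1).congr ?_
  exact (ae_restrict_iff' measurableSet_Ioc).mpr
    (.of_forall fun u hu ↦ inv_one_sub_log_mul_cancel hu.1 hu.2 (g u))

theorem sum_primesLE_integral_eq_integral_primeCounting_mul {g : ℝ → ℝ}
    (hg : ∀ a > 0, IntegrableOn g (Set.Icc a 1)) {X : ℝ} (hX : 0 < X) :
    ∑ p ∈ Nat.primesLE ⌊X⌋₊, ∫ u in (p / X : ℝ)..1, g u =
      ∫ u in Set.Ioc (0 : ℝ) 1, (Nat.primeCounting ⌊u * X⌋₊ : ℝ) * g u := by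
  have hpos (p : ℕ) (hp : p ∈ Nat.primesLE ⌊X⌋₊) : 0 < (p / X : ℝ) :=
    div_pos (mod_cast (Nat.prime_of_mem_primesLE hp).pos) hX
  have hle (p : ℕ) (hp : p ∈ Nat.primesLE ⌊X⌋₊) : (p / X : ℝ) ≤ 1 :=
    (div_le_one hX).mpr ((Nat.le_floor_iff hX.le).mp (Nat.le_of_mem_primesLE hp))
  rw [sum_intervalIntegral_eq_integral_card_smul _ zero_le_one hpos hle
    fun p hp ↦ hg _ (hpos p hp), intervalIntegral.integral_of_le zero_le_one]
  refine setIntegral_congr_fun measurableSet_Ioc fun u hu ↦ ?_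
  simp only [card_primesLE_filter_div_le hX hu.1.le hu.2, nsmul_eq_mul]

theorem tendsto_log_div_mul_sum_primesLE_integral {g : ℝ → ℝ}
    (hg : IntegrableOn (fun u ↦ (1 - log u) * (u * g u)) (Set.Ioc 0 1)) :
    Tendsto (fun X : ℝ ↦ log X / X * ∑ p ∈ Nat.primesLE ⌊X⌋₊, ∫ u in (p / X : ℝ)..1, g u) atTop
      (𝓝 (∫ u in (0 : ℝ)..1, u * g u)) := by
  have hlim : Tendsto (fun X : ℝ ↦ ∫ u in Set.Ioc (0 : ℝ) 1,
      Nat.primeCounting ⌊u * X⌋₊ * log X / X * g u) atTop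
      (𝓝 (∫ u in Set.Ioc (0 : ℝ) 1, u * g u)) := by
    refine tendsto_integral_filter_of_dominated_convergence
      (fun u ↦ (2 * log 4 + 2) * ‖(1 - log u) * (u * g u)‖) (.of_forall fun X ↦ ?_) ?_
      (hg.norm.const_mul _) ((ae_restrict_iff' measurableSet_Ioc).mpr (.of_forall fun u hu ↦
        (tendsto_primeCounting_mul_mul_log_div hu.1).mul_const _))
    · have hcount : Measurable fun u : ℝ ↦ (Nat.primeCounting ⌊u * X⌋₊ : ℝ) :=
        (measurable_from_top (f := fun n : ℕ ↦ (Nat.primeCounting n : ℝ))).comp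
          (Nat.measurable_floor.comp (measurable_mul_const X))
      exact ((hcount.mul_const _).div_const _).aestronglyMeasurable.mul
        (aestronglyMeasurable_of_integrableOn_one_sub_log_mul hg)
    · filter_upwards [eventually_ge_atTop 1] with X hX
      refine (ae_restrict_iff' measurableSet_Ioc).mpr (.of_forall fun u ⟨hu0, hu1⟩ ↦ ?_)
      have hX0 : 0 < X := one_pos.trans_le hX
      have hlogu := log_nonpos hu0.le hu1
      have hnonneg : 0 ≤ Nat.primeCounting ⌊u * X⌋₊ * log X / X := by
        have := log_nonneg hX
        positivity
      have hle : Nat.primeCounting ⌊u * X⌋₊ * log X / X ≤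
          (2 * log 4 + 2) * ((1 - log u) * u) := by
        rw [div_le_iff₀ hX0, mul_assoc, mul_assoc]
        exact primeCounting_mul_mul_log_le hu0 hu1 hX
      rw [← mul_assoc, norm_mul, norm_mul, norm_of_nonneg hnonneg,
        norm_of_nonneg (mul_nonneg (by linarith) hu0.le), ← mul_assoc]
      gcongr
  rw [intervalIntegral.integral_of_le zero_le_one]
  refine hlim.congr' ?_
  filter_upwards [eventually_gt_atTop 0] with X hX
  rw [sum_primesLE_integral_eq_integral_primeCounting_mul
    (fun a ha ↦ integrableOn_Icc_of_integrableOn_one_sub_log_mul hg ha) hX, ← integral_const_mul]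
  congr 1 with u
  ring

end SumOverPrimes

section Profile

theorem mul_inv_sub_inv_two_sub {u : ℝ} (hu0 : u ≠ 0) (hu2 : 2 - u ≠ 0) :
    u * (u⁻¹ - (2 - u)⁻¹) = 2 - 2 * (2 - u)⁻¹ := by
  field_simp
  ring

theorem integral_inv_sub_inv_two_sub {a : ℝ} (ha : 0 < a) (ha1 : a ≤ 1) :
    ∫ u in a..1, (u⁻¹ - (2 - u)⁻¹) = -log (1 - (1 - a) ^ 2) := by
  have hmem {u : ℝ} (hu : u ∈ Set.uIcc a 1) : u ≠ 0 ∧ 2 - u ≠ 0 := by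
    rw [Set.uIcc_of_le ha1] at hu
    constructor <;> linarith [hu.1, hu.2]
  have hderiv (u : ℝ) (hu : u ∈ Set.uIcc a 1) :
      HasDerivAt (fun u ↦ log u + log (2 - u)) (u⁻¹ - (2 - u)⁻¹) u := by
    have h := ((hasDerivAt_id' u).const_sub 2).log (hmem hu).2
    exact ((hasDerivAt_log (hmem hu).1).add h).congr_deriv (by ring)
  have hcont : ContinuousOn (fun u ↦ u⁻¹ - (2 - u)⁻¹) (Set.uIcc a 1) :=
    (continuousOn_id.inv₀ fun u hu ↦ (hmem hu).1).sub
      ((continuousOn_const.sub continuousOn_id).inv₀ fun u hu ↦ (hmem hu).2)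
  rw [intervalIntegral.integral_eq_sub_of_hasDerivAt hderiv hcont.intervalIntegrable,
    show 1 - (1 - a) ^ 2 = a * (2 - a) by ring, log_mul ha.ne' (by linarith)]
  norm_num

theorem continuousOn_two_sub_two_mul_inv_two_sub :
    ContinuousOn (fun u : ℝ ↦ 2 - 2 * (2 - u)⁻¹) (Set.uIcc 0 1) := by
  refine continuousOn_const.sub (continuousOn_const.mul
    ((continuousOn_const.sub continuousOn_id).inv₀ fun u hu ↦ ?_))
  rw [Set.uIcc_of_le zero_le_one] at hu
  exact (sub_pos.mpr (hu.2.trans_lt one_lt_two)).ne'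

theorem integral_mul_inv_sub_inv_two_sub :
    ∫ u in (0 : ℝ)..1, u * (u⁻¹ - (2 - u)⁻¹) = 2 - log 4 := by
  have hderiv (u : ℝ) (hu : u ∈ Set.uIcc (0 : ℝ) 1) :
      HasDerivAt (fun u ↦ 2 * u + 2 * log (2 - u)) (2 - 2 * (2 - u)⁻¹) u := by
    rw [Set.uIcc_of_le zero_le_one] at hu
    have h := ((hasDerivAt_id' u).const_sub 2).log (by linarith [hu.2])
    exact (((hasDerivAt_id' u).const_mul 2).add (h.const_mul 2)).congr_deriv (by ring)
  have hcongr : ∫ u in (0 : ℝ)..1, u * (u⁻¹ - (2 - u)⁻¹) =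
      ∫ u in (0 : ℝ)..1, (2 - 2 * (2 - u)⁻¹) := by
    refine intervalIntegral.integral_congr_ae (.of_forall fun u hu ↦ ?_)
    rw [Set.uIoc_of_le zero_le_one] at hu
    exact mul_inv_sub_inv_two_sub hu.1.ne' (by linarith [hu.2])
  rw [hcongr, intervalIntegral.integral_eq_sub_of_hasDerivAt hderiv
    continuousOn_two_sub_two_mul_inv_two_sub.intervalIntegrable,
    show (4 : ℝ) = 2 ^ 2 by norm_num, log_pow]
  norm_num

theorem integrableOn_one_sub_log_mul_mul_inv_sub_inv_two_sub :
    IntegrableOn (fun u : ℝ ↦ (1 - log u) * (u * (u⁻¹ - (2 - u)⁻¹))) (Set.Ioc 0 1) := by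
  have hlog : IntervalIntegrable (fun u ↦ 1 - log u) volume 0 1 :=
    intervalIntegrable_const.sub intervalIntegral.intervalIntegrable_log'
  refine ((intervalIntegrable_iff_integrableOn_Ioc_of_le zero_le_one).mp
    (hlog.mul_continuousOn continuousOn_two_sub_two_mul_inv_two_sub)).congr_fun (fun u hu ↦ ?_)
    measurableSet_Ioc
  rw [mul_inv_sub_inv_two_sub hu.1.ne' (by linarith [hu.2])]

end Profile

/-- As X → ∞, (log X / X) · Σ_{p ≤ X} (− log(1 − (1 − p/X)²)) → 2 − log 4. -/
theorem resonator_norm_asymptotics :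
    Filter.Tendsto (fun X : ℝ =>
        (Real.log X / X) * ∑ p ∈ (Finset.range (Nat.floor X + 1)).filter Nat.Prime,
          (-Real.log (1 - (1 - (p : ℝ) / X) ^ (2 : ℕ))))
      Filter.atTop (nhds (2 - Real.log 4)) := by
  rw [← integral_mul_inv_sub_inv_two_sub]
  refine (tendsto_log_div_mul_sum_primesLE_integral
    integrableOn_one_sub_log_mul_mul_inv_sub_inv_two_sub).congr' ?_
  filter_upwards [eventually_gt_atTop 0] with X hX
  rw [← Nat.primesLE_eq_filter_range]
  congr 1
  refine sum_congr rfl fun p hp ↦ ?_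
  have hp0 : 0 < (p : ℝ) := mod_cast (Nat.prime_of_mem_primesLE hp).pos
  have hpX : (p : ℝ) ≤ X := (Nat.le_floor_iff hX.le).mp (Nat.le_of_mem_primesLE hp)
  exact integral_inv_sub_inv_two_sub (div_pos hp0 hX) ((div_le_one hX).mpr hpX)
end
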